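/- arXiv:1603.08590 — 12 statements merged into one kernel-verified Lean document; each statement's English description precedes it below -/
import Mathlib

section
/- Every proto-unital shelf is associative: if (X,*) is a shelf satisfying a*b = b*(a*b) and a*b = (a*b)*b for all a,b ∈ X, then (a*b)*c = a*(b*c) for all a,b,c ∈ X. -/
theorem op_op_eq_op_of_op_eq_right {X : Type*} {op : X → X → X}
    (sd : ∀ a b c : X, op (op a b) c = op (op a c) (op b c))
    (h_absorb : ∀ a b : X, op a b = op (op a b) b)
    {c d : X} (hcd : op c d = d) (a : X) :
    op (op a c) d = op a d :=
  calc op (op a c) d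
      = op (op a d) (op c d) := sd a c d
    _ = op (op a d) d := by rw [hcd]
    _ = op a d := (h_absorb a d).symm

/-- Every proto-unital shelf is associative. -/
theorem proto_unital_shelf_assoc {X : Type*} (op : X → X → X)
    (sd : ∀ a b c : X, op (op a b) c = op (op a c) (op b c))
    (h₁ : ∀ a b : X, op a b = op b (op a b))
    (h₂ : ∀ a b : X, op a b = op (op a b) b) :
    ∀ a b c : X, op (op a b) c = op a (op b c) := by
  intro a b c
  have fixed_by_c : op c (op b c) = op b c := (h₁ b c).symm
  calc op (op a b) c
      = op (op a c) (op b c) := sd a b c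
    _ = op a (op b c) := op_op_eq_op_of_op_eq_right sd h₂ fixed_by_c a
end

section
/- Let (X,*) be a unital shelf with unit 1. If a*b = 1 for some a,b ∈ X, then a = 1 and b = 1. (Consequently the set X \ {1} is closed under * and forms a pre-unital shelf.) -/
open scoped Quandles

lemma act_eq_one_iff {S : Type*} [UnitalShelf S] {x y : S} : x ◃ y = 1 ↔ x = 1 ∧ y = 1 := by
  constructor
  · intro hxy
    have hx : x = 1 := calc
      x = x ◃ 1 := (UnitalShelf.act_one x).symm
      _ = x ◃ x ◃ y := by rw [hxy]
      _ = x ◃ y := UnitalShelf.act_self_act_eq x y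
      _ = 1 := hxy
    have hy : y = 1 := calc
      y = 1 ◃ y := (UnitalShelf.one_act y).symm
      _ = x ◃ y := by rw [hx]
      _ = 1 := hxy
    exact ⟨hx, hy⟩
  · rintro ⟨rfl, rfl⟩
    exact UnitalShelf.one_act 1

/-- In a unital shelf, if `a*b = 1` then `a = 1` and `b = 1`. -/
theorem unital_shelf_no_unit_product {X : Type*} (op : X → X → X)
    (sd : ∀ a b c : X, op (op a b) c = op (op a c) (op b c))
    (e : X) (he₁ : ∀ x : X, op e x = x) (he₂ : ∀ x : X, op x e = x) :
    ∀ a b : X, op a b = e → a = e ∧ b = e := by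
  -- Mathlib's shelves are left self-distributive, so `op a b` is `b ◃ a`.
  let _ : UnitalShelf X :=
    { act := fun x y ↦ op y x
      self_distrib := sd _ _ _
      one := e
      one_act := he₂
      act_one := he₁ }
  intro a b hab
  have hba : b ◃ a = 1 := hab
  exact (act_eq_one_iff.mp hba).symm
end

section
/- For every natural number n, the free associative shelf FAS(n) is a finite set. -/
/-- The self-distributivity relation on the free semigroup on `n` generators:
`(x*y)*z` is related to `(x*z)*(y*z)`. -/
def shelfRel (n : ℕ) : FreeSemigroup (Fin n) → FreeSemigroup (Fin n) → Prop :=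
  fun a b => ∃ x y z : FreeSemigroup (Fin n), a = (x * y) * z ∧ b = (x * z) * (y * z)

/-- The free associative shelf on `n` generators: the quotient of the free
semigroup on `n` generators by the smallest multiplicative congruence containing
the self-distributivity relation. -/
def FAS (n : ℕ) : Type := (conGen (shelfRel n)).Quotient

/-!
In an associative shelf `x * z * y * z = x * y * z`, so a letter `z` of a word, other than the first
letter, may be erased as soon as it occurs again further right and not immediately after. A word of
length greater than `2 * n + 1` in `n` letters has some letter occurring three times after its first
position, and the first of these occurrences can be erased. Hence every element is represented by a
word of length at most `2 * n + 1`, and there are finitely many of those.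
-/

/-- An associative shelf: a semigroup in which multiplication distributes over itself from the
right. Mathlib's `Shelf` is distributive on the other side. -/
class AssociativeShelf (S : Type*) extends Semigroup S where
  mul_mul_distrib (x y z : S) : x * y * z = x * z * (y * z)

namespace AssociativeShelf

theorem mul_mul_mul_absorb {S : Type*} [AssociativeShelf S] (x y z : S) :
    x * z * y * z = x * y * z := by
  rw [mul_assoc (x * z), ← mul_mul_distrib]

end AssociativeShelf

section Lists

variable {α : Type*} [DecidableEq α]

theorem exists_lt_count_of_mul_card_lt_length [Fintype α] {k : ℕ} {l : List α}
    (hl : k * Fintype.card α < l.length) : ∃ a, k < l.count a := by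
  have sum_count : ∑ a, l.count a = l.length := by
    simpa using Multiset.sum_count_eq_card (s := Finset.univ) (m := (l : Multiset α)) (by simp)
  by_contra! hcount
  refine hl.not_ge ?_
  calc l.length = ∑ a, l.count a := sum_count.symm
    _ ≤ ∑ _a : α, k := Finset.sum_le_sum fun a _ => hcount a
    _ = k * Fintype.card α := by simp [mul_comm]

theorem exists_eq_append_cons_append_cons_of_two_lt_count {a : α} {l : List α}
    (h : 2 < l.count a) : ∃ p u t, u ≠ [] ∧ l = p ++ a :: (u ++ a :: t) := by
  -- Of three occurrences of `a`, the outer two are separated by the middle one.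
  have triple : [a, a, a].Sublist l := List.replicate_sublist_iff.2 h
  obtain ⟨l₁, l₂, rfl, mem₁, pair⟩ := List.cons_sublist_iff.1 triple
  obtain ⟨l₂, l₃, rfl, mem₂, single⟩ := List.cons_sublist_iff.1 pair
  obtain ⟨p, u, rfl⟩ := List.mem_iff_append.1 mem₁
  obtain ⟨v, t, rfl⟩ := List.mem_iff_append.1 (List.singleton_sublist.1 single)
  exact ⟨p, u ++ l₂ ++ v, t, by simp [List.ne_nil_of_mem mem₂], by simp⟩

end Lists

section Words

variable {α : Type*}

theorem finite_setOf_freeSemigroup_length_le [Finite α] (k : ℕ) :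
    {w : FreeSemigroup α | w.length ≤ k}.Finite := by
  refine ((Set.finite_univ.prod (List.finite_length_le α k)).image
    fun p => (⟨p.1, p.2⟩ : FreeSemigroup α)).subset ?_
  rintro ⟨a, l⟩ hw
  exact ⟨(a, l), ⟨trivial, (Nat.le_succ l.length).trans hw⟩, rfl⟩

theorem map_mk_append_congr {M : Type*} [Mul M] (φ : FreeSemigroup α →ₙ* M) {a b : α}
    {l l' : List α} (h : φ ⟨a, l⟩ = φ ⟨b, l'⟩) (t : List α) :
    φ ⟨a, l ++ t⟩ = φ ⟨b, l' ++ t⟩ := by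
  cases t with
  | nil => simpa only [List.append_nil] using h
  | cons c t => simp only [← FreeSemigroup.mk_mul_mk, map_mul, h]

variable {S : Type*} [AssociativeShelf S] (φ : FreeSemigroup α →ₙ* S)

theorem map_mk_erase_earlier (a z : α) (p : List α) {u : List α} (hu : u ≠ []) (t : List α) :
    φ ⟨a, p ++ z :: (u ++ z :: t)⟩ = φ ⟨a, p ++ (u ++ z :: t)⟩ := by
  obtain ⟨b, u, rfl⟩ := List.exists_cons_of_ne_nil hu
  have erase : φ ⟨a, p ++ z :: (b :: u ++ [z])⟩ = φ ⟨a, p ++ (b :: u ++ [z])⟩ := by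
    simpa only [← map_mul, FreeSemigroup.of, FreeSemigroup.mk_mul_mk, List.append_assoc,
      List.cons_append, List.nil_append] using
      AssociativeShelf.mul_mul_mul_absorb (φ ⟨a, p⟩) (φ ⟨b, u⟩) (φ (.of z))
  simpa only [List.append_assoc, List.cons_append, List.nil_append] using
    map_mk_append_congr φ erase t

theorem exists_map_eq_length_lt [Fintype α] {w : FreeSemigroup α}
    (hw : 2 * Fintype.card α + 1 < w.length) : ∃ w', φ w' = φ w ∧ w'.length < w.length := by
  classical
  obtain ⟨a, l⟩ := w
  have hl : 2 * Fintype.card α < l.length := Nat.succ_lt_succ_iff.1 hw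
  obtain ⟨z, hz⟩ := exists_lt_count_of_mul_card_lt_length hl
  obtain ⟨p, u, t, hu, rfl⟩ := exists_eq_append_cons_append_cons_of_two_lt_count hz
  exact ⟨⟨a, p ++ (u ++ z :: t)⟩, (map_mk_erase_earlier φ a z p hu t).symm, by
    simp [FreeSemigroup.length]⟩

theorem exists_map_eq_length_le [Fintype α] (w : FreeSemigroup α) :
    ∃ w', φ w' = φ w ∧ w'.length ≤ 2 * Fintype.card α + 1 := by
  obtain ⟨w', hw', minimal⟩ := exists_minimalFor_of_wellFoundedLT
    (fun v => φ v = φ w) FreeSemigroup.length ⟨w, rfl⟩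
  refine ⟨w', hw', ?_⟩
  by_contra! long
  obtain ⟨v, hv, shorter⟩ := exists_map_eq_length_lt φ long
  exact shorter.not_ge (minimal (hv.trans hw') shorter.le)

end Words

theorem FAS_finite_general {α S : Type*} [Finite α] [AssociativeShelf S]
    (φ : FreeSemigroup α →ₙ* S) (hφ : Function.Surjective φ) : Finite S := by
  have := Fintype.ofFinite α
  have short_words := finite_setOf_freeSemigroup_length_le (α := α) (2 * Fintype.card α + 1)
  refine Set.finite_univ_iff.1 ((short_words.image φ).subset fun s _ => ?_)
  obtain ⟨w, rfl⟩ := hφ s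
  obtain ⟨w', hw', short⟩ := exists_map_eq_length_le φ w
  exact ⟨w', short, hw'⟩

namespace FAS

variable (n : ℕ)

instance : Semigroup (FAS n) :=
  inferInstanceAs (Semigroup (conGen (shelfRel n)).Quotient)

/-- The quotient map from the free semigroup, sending a word to the element it represents. -/
def mk : FreeSemigroup (Fin n) →ₙ* FAS n :=
  (conGen (shelfRel n)).mkMulHom

theorem mk_surjective : Function.Surjective (mk n) :=
  Quotient.mk''_surjective

theorem mk_mul_mul_distrib (x y z : FreeSemigroup (Fin n)) :
    mk n (x * y * z) = mk n (x * z * (y * z)) :=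
  (Con.eq _).2 (.of _ _ ⟨x, y, z, rfl, rfl⟩)

instance : AssociativeShelf (FAS n) where
  mul_mul_distrib := by
    simpa only [(mk_surjective n).forall, ← map_mul] using mk_mul_mul_distrib n

end FAS

/-- For every `n`, the free associative shelf `FAS(n)` is finite. -/
theorem FAS_finite (n : ℕ) : Finite (FAS n) :=
  FAS_finite_general (FAS.mk n) (FAS.mk_surjective n)
end

section
/- Let c_n denote the cardinality of the free associative shelf FAS(n). Then c_0 = 0, c_1 = 3, and for all n ≥ 2 the two-term recursion c_n + (n-1)·c_{n-2} = (n+2)·c_{n-1} + 3n holds (equivalently, c_n = (n+2)c_{n-1} − (n-1)c_{n-2} + 3n). -/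
/-!
Every word is determined in the free associative shelf by its first letter and a reduced form of
its tail: in an associative shelf `x * a * w = x * w` whenever `a` is a factor of `w` and `w` has at
least two factors, so all occurrences of a letter in the tail can be erased except the last one,
until only a final `[a, a]` resists. Conversely this reduced form is compatible with concatenation
and with self-distributivity. Hence `c n = n * r n`, where `r n` counts the reduced tails. A
nonempty one is either `[a, a]`, or a letter `a` followed by a reduced tail in the other letters, so
`r (n + 1) = 1 + (n + 1) * (1 + r n)`, and the recursion for `c` follows by elimination.
-/

namespace FAS

section IsAssocShelf

/-- A semigroup is an associative shelf if its multiplication distributes over itself from the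
right. -/
def IsAssocShelf (S : Type*) [Semigroup S] : Prop :=
  ∀ x y z : S, x * y * z = x * z * (y * z)

/-- The congruence whose quotient is the largest quotient of `M` that is an associative shelf. For
`M = FreeSemigroup (Fin n)` it is definitionally `conGen (shelfRel n)`. -/
def shelfCon (M : Type*) [Semigroup M] : Con M :=
  conGen fun a b => ∃ x y z : M, a = (x * y) * z ∧ b = (x * z) * (y * z)

theorem isAssocShelf_quotient_shelfCon (M : Type*) [Semigroup M] :
    IsAssocShelf (shelfCon M).Quotient := by
  rintro ⟨x⟩ ⟨y⟩ ⟨z⟩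
  exact (Con.eq _).2 (ConGen.Rel.of _ _ ⟨x, y, z, rfl, rfl⟩)

variable {α S : Type*} [Semigroup S]

theorem IsAssocShelf.mul_mul_self_mul (h : IsAssocShelf S) (x a w : S) :
    x * a * a * w = x * a * w :=
  calc x * a * a * w
    _ = x * (a * a * w) := by simp only [mul_assoc]
    _ = x * (a * w * (a * w)) := by rw [h a a w]
    _ = x * a * w * a * w := by simp only [mul_assoc]
    _ = x * w * a * w := by rw [h x w a]; simp only [mul_assoc]
    _ = x * a * w := by rw [h x a w]; simp only [mul_assoc]

theorem IsAssocShelf.foldl_mul_cons_of_mem (h : IsAssocShelf S) (g : α → S) {a : α} {l : List α}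
    (ha : a ∈ l) (hl : 1 < l.length) (s : S) :
    (a :: l).foldl (· * g ·) s = l.foldl (· * g ·) s := by
  obtain ⟨u, v, rfl⟩ := List.append_of_mem ha
  cases u with
  | nil =>
    cases v with
    | nil => simp at hl
    | cons w v => simp only [List.nil_append, List.foldl_cons, h.mul_mul_self_mul]
  | cons y u =>
    have foldl_eq_mul (t : S) :
        (y :: u).foldl (· * g ·) t = t * FreeSemigroup.lift g ⟨y, u⟩ := by
      rw [FreeSemigroup.lift_mk_eq_foldl, List.foldl_cons]
      simp only [← List.foldl_map (f := g) (g := fun s b : S => s * b), List.foldl_assoc]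
    have absorb (p : S) : s * g a * p * g a = s * p * g a := by
      rw [h s p (g a), ← mul_assoc]
    rw [List.foldl_cons, List.foldl_append, List.foldl_append, foldl_eq_mul, foldl_eq_mul,
      List.foldl_cons, List.foldl_cons, absorb]

end IsAssocShelf

variable {α : Type*} [DecidableEq α]

/-- The reduced form of the tail of a word: from left to right, erase each letter that occurs again
later, unless only one letter is left after it. -/
def reduce : List α → List α
  | [] => []
  | a :: l => if a ∈ l ∧ 1 < l.length then reduce l else a :: reduce l

theorem reduce_cons_of_mem {a : α} {l : List α} (ha : a ∈ l) (hl : 1 < l.length) :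
    reduce (a :: l) = reduce l :=
  if_pos ⟨ha, hl⟩

theorem reduce_append_of_subset {u l : List α} (hu : u ⊆ l) (hl : 1 < l.length) :
    reduce (u ++ l) = reduce l := by
  induction u with
  | nil => rfl
  | cons a u ih =>
    obtain ⟨ha, hu⟩ := List.cons_subset.1 hu
    rw [List.cons_append, reduce_cons_of_mem (List.mem_append_right u ha) (by grind), ih hu]

theorem reduce_sublist (l : List α) : (reduce l).Sublist l := by
  induction l with
  | nil => exact .slnil
  | cons a l ih =>
    rw [reduce]
    split_ifs
    · exact ih.cons a
    · exact ih.cons_cons a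

@[simp]
theorem mem_reduce {a : α} {l : List α} : a ∈ reduce l ↔ a ∈ l := by
  induction l with
  | nil => rfl
  | cons b l ih => grind [reduce]

@[simp]
theorem reduce_eq_nil_iff {l : List α} : reduce l = [] ↔ l = [] := by
  simp only [List.eq_nil_iff_forall_not_mem, mem_reduce]

@[simp]
theorem one_lt_length_reduce {l : List α} : 1 < (reduce l).length ↔ 1 < l.length := by
  induction l with
  | nil => rfl
  | cons a l ih =>
    rw [reduce]
    split_ifs with h
    · simp only [ih, h.2, List.length_cons, true_iff]
      exact h.2.trans (Nat.lt_succ_self _)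
    · simp [List.length_pos_iff]

theorem length_reduce_le (l : List α) : (reduce l).length ≤ l.toFinset.card + 1 := by
  induction l with
  | nil => exact Nat.zero_le _
  | cons a l ih =>
    rw [reduce]
    split_ifs with h
    · simpa [List.mem_toFinset.2 h.1] using ih
    · by_cases ha : a ∈ l
      · obtain ⟨b, rfl⟩ : ∃ b, l = [b] := List.length_eq_one_iff.1 (by grind)
        simp [reduce]
      · simpa [Finset.card_insert_of_notMem, ha] using ih

theorem reduce_cons_congr (a : α) {s t : List α} (h : reduce s = reduce t) :
    reduce (a :: s) = reduce (a :: t) := by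
  have mem_iff : a ∈ s ↔ a ∈ t := by rw [← mem_reduce, h, mem_reduce]
  have length_iff : 1 < s.length ↔ 1 < t.length := by
    rw [← one_lt_length_reduce, h, one_lt_length_reduce]
  simp only [reduce, mem_iff, length_iff, h]

theorem reduce_append_congr_right (s : List α) {t t' : List α} (h : reduce t = reduce t') :
    reduce (s ++ t) = reduce (s ++ t') := by
  induction s with
  | nil => exact h
  | cons a s ih => exact reduce_cons_congr a ih

theorem reduce_reduce_append (s t : List α) : reduce (reduce s ++ t) = reduce (s ++ t) := by
  induction s with
  | nil => rfl
  | cons a s ih =>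
    rw [reduce]
    split_ifs with h
    · rw [ih, List.cons_append, reduce_cons_of_mem (List.mem_append_left t h.1) (by grind)]
    · exact reduce_cons_congr a ih

theorem reduce_append_congr {s s' t t' : List α} (hs : reduce s = reduce s')
    (ht : reduce t = reduce t') : reduce (s ++ t) = reduce (s' ++ t') := by
  rw [← reduce_reduce_append s, hs, reduce_reduce_append, reduce_append_congr_right s' ht]

theorem reduce_reduce (l : List α) : reduce (reduce l) = reduce l := by
  simpa using reduce_reduce_append l []

theorem reduce_map {β : Type*} [DecidableEq β] {f : α → β} (hf : Function.Injective f)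
    (l : List α) : reduce (l.map f) = (reduce l).map f := by
  induction l with
  | nil => rfl
  | cons a l ih => simp only [List.map_cons, reduce, List.mem_map_of_injective hf,
      List.length_map, ih, apply_ite (List.map f)]

theorem reduce_cons_eq_self_iff {a : α} {l : List α} :
    reduce (a :: l) = a :: l ↔ reduce l = l ∧ (a ∈ l → l = [a]) := by
  rw [reduce]
  split_ifs with h
  · have := (reduce_sublist l).length_le
    grind
  · rw [List.cons_inj_right, iff_self_and]
    rintro - ha
    obtain ⟨b, rfl⟩ : ∃ b, l = [b] := List.length_eq_one_iff.1 (by grind)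
    rw [List.mem_singleton.1 ha]

/-- The possible tails of normal forms: lists in which no letter repeats, except that the last one
may be doubled. -/
abbrev ReducedList (α : Type*) [DecidableEq α] : Type _ := {l : List α // reduce l = l}

/-- The normal form of a word in the free associative shelf: its first letter and its reduced
tail. -/
def normalForm (w : FreeSemigroup α) : α × ReducedList α :=
  (w.head, ⟨reduce w.tail, reduce_reduce _⟩)

theorem normalForm_eq_iff {v w : FreeSemigroup α} :
    normalForm v = normalForm w ↔ v.head = w.head ∧ reduce v.tail = reduce w.tail := by
  simp only [normalForm, Prod.mk.injEq, Subtype.mk.injEq]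

theorem normalForm_surjective : Function.Surjective (normalForm (α := α)) := by
  rintro ⟨a, l, hl⟩
  exact ⟨⟨a, l⟩, by simp only [normalForm, hl]⟩

/-- Equality of normal forms, as a congruence on words. -/
def normalFormCon (α : Type*) [DecidableEq α] : Con (FreeSemigroup α) where
  toSetoid := Setoid.ker normalForm
  mul' := by
    intro v v' w w' hv hw
    obtain ⟨hv_head, hv_tail⟩ := normalForm_eq_iff.1 hv
    obtain ⟨hw_head, hw_tail⟩ := normalForm_eq_iff.1 hw
    refine normalForm_eq_iff.2 ⟨hv_head, reduce_append_congr hv_tail ?_⟩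
    rw [hw_head]
    exact reduce_cons_congr w'.head hw_tail

theorem IsAssocShelf.foldl_mul_reduce {S : Type*} [Semigroup S] (h : IsAssocShelf S) (g : α → S)
    (l : List α) (s : S) : (reduce l).foldl (· * g ·) s = l.foldl (· * g ·) s := by
  induction l generalizing s with
  | nil => rfl
  | cons a l ih =>
    rw [reduce]
    split_ifs with ha
    · rw [ih, h.foldl_mul_cons_of_mem g ha.1 ha.2]
    · exact ih _

theorem IsAssocShelf.map_eq_of_normalForm_eq {S : Type*} [Semigroup S] (h : IsAssocShelf S)
    (f : FreeSemigroup α →ₙ* S) {v w : FreeSemigroup α} (hvw : normalForm v = normalForm w) :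
    f v = f w := by
  obtain ⟨g, rfl⟩ := FreeSemigroup.lift.surjective f
  obtain ⟨a, s⟩ := v
  obtain ⟨b, t⟩ := w
  obtain ⟨rfl : a = b, htail : reduce s = reduce t⟩ := normalForm_eq_iff.1 hvw
  rw [FreeSemigroup.lift_mk_eq_foldl, FreeSemigroup.lift_mk_eq_foldl, ← h.foldl_mul_reduce g s,
    htail, h.foldl_mul_reduce]

theorem shelfCon_eq_normalFormCon : shelfCon (FreeSemigroup α) = normalFormCon α := by
  apply le_antisymm
  · refine Con.conGen_le.2 ?_
    rintro _ _ ⟨x, y, z, rfl, rfl⟩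
    refine normalForm_eq_iff.2 ⟨rfl, ?_⟩
    simp only [FreeSemigroup.tail_mul, FreeSemigroup.head_mul, List.append_assoc]
    refine reduce_append_congr_right _ ?_
    exact (reduce_append_of_subset (u := z.head :: z.tail) (by simp) (by simp)).symm
  · intro v w hvw
    refine (Con.eq _).1 ?_
    exact (isAssocShelf_quotient_shelfCon _).map_eq_of_normalForm_eq
      (⟨(↑), fun _ _ => rfl⟩ : FreeSemigroup α →ₙ* (shelfCon (FreeSemigroup α)).Quotient) hvw

theorem card_quotient_shelfCon :
    Nat.card (shelfCon (FreeSemigroup α)).Quotient = Nat.card α * Nat.card (ReducedList α) := by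
  rw [shelfCon_eq_normalFormCon, ← Nat.card_prod]
  exact Nat.card_congr (Setoid.quotientKerEquivOfSurjective normalForm normalForm_surjective)

instance [Finite α] : Finite (ReducedList α) := by
  have := Fintype.ofFinite α
  refine ((List.finite_length_le α (Fintype.card α + 1)).subset fun l hl => ?_).to_subtype
  calc l.length = (reduce l).length := by rw [hl]
    _ ≤ l.toFinset.card + 1 := length_reduce_le l
    _ ≤ Fintype.card α + 1 := by gcongr; exact Finset.card_le_univ _

theorem card_reducedList_of_isEmpty [IsEmpty α] : Nat.card (ReducedList α) = 1 :=
  Nat.card_eq_one_iff_exists.2 ⟨⟨[], rfl⟩, fun _ => Subsingleton.elim _ _⟩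

/-- Assembles a reduced list: `none` is the empty list, `some (a, none)` is `[a, a]`, and
`some (a, some l)` is `a` followed by `l`, whose letters in `Fin n` are identified with those other
than `a` through `a.succAbove`. -/
def ReducedList.ofHeadTail {n : ℕ} :
    Option (Fin (n + 1) × Option (ReducedList (Fin n))) → ReducedList (Fin (n + 1))
  | none => ⟨[], rfl⟩
  | some (a, none) => ⟨[a, a], by simp [reduce]⟩
  | some (a, some l) => ⟨a :: l.1.map a.succAbove, reduce_cons_eq_self_iff.2
      ⟨by rw [reduce_map a.succAbove_right_injective, l.2], by simp [a.succAbove_ne]⟩⟩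

theorem ReducedList.ofHeadTail_injective {n : ℕ} :
    Function.Injective (ReducedList.ofHeadTail (n := n)) := by
  have ne_map (a : Fin (n + 1)) (l : List (Fin n)) : [a] ≠ l.map a.succAbove := fun h => by
    have := h ▸ List.mem_singleton_self a
    simp [a.succAbove_ne] at this
  rintro (_ | ⟨a, _ | l⟩) (_ | ⟨b, _ | m⟩) h <;>
    replace h := congrArg Subtype.val h <;>
    simp only [ofHeadTail, List.cons.injEq, and_true, reduceCtorEq] at h
  · rfl
  · rw [h.1]
  · obtain ⟨rfl, h⟩ := h
    exact (ne_map a m.1 h).elim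
  · obtain ⟨rfl, h⟩ := h
    exact (ne_map a l.1 h.symm).elim
  · obtain ⟨rfl, h⟩ := h
    rw [Subtype.ext (List.map_injective_iff.2 a.succAbove_right_injective h)]

theorem ReducedList.ofHeadTail_surjective {n : ℕ} :
    Function.Surjective (ReducedList.ofHeadTail (n := n)) := by
  rintro ⟨_ | ⟨a, l⟩, hl⟩
  · exact ⟨none, rfl⟩
  obtain ⟨hl, ha⟩ := reduce_cons_eq_self_iff.1 hl
  by_cases hmem : a ∈ l
  · exact ⟨some (a, none), Subtype.ext (congrArg (a :: ·) (ha hmem).symm)⟩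
  · obtain ⟨m, rfl⟩ : l ∈ Set.range (List.map a.succAbove) := by
      rw [Set.range_list_map, Fin.range_succAbove]
      exact fun x hx hxa => hmem (hxa ▸ hx)
    have inj := a.succAbove_right_injective
    have hm : reduce m = m := List.map_injective_iff.2 inj (by rw [← reduce_map inj, hl])
    exact ⟨some (a, some ⟨m, hm⟩), rfl⟩

theorem card_reducedList_fin_succ (n : ℕ) :
    Nat.card (ReducedList (Fin (n + 1))) = 1 + (n + 1) * (1 + Nat.card (ReducedList (Fin n))) := by
  rw [← Nat.card_eq_of_bijective _
      ⟨ReducedList.ofHeadTail_injective, ReducedList.ofHeadTail_surjective⟩,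
    Finite.card_option, Nat.card_prod, Finite.card_option, Nat.card_fin]
  ring

theorem card_eq_mul_card_reducedList (n : ℕ) :
    Nat.card (FAS n) = n * Nat.card (ReducedList (Fin n)) :=
  card_quotient_shelfCon.trans (by rw [Nat.card_fin])

end FAS

/-- With `c n = Nat.card (FAS n)`, we have `c 0 = 0`, `c 1 = 3`, and
for `n ≥ 2` the two-term recursion `c n + (n-1)·c (n-2) = (n+2)·c (n-1) + 3n`. -/
theorem FAS_card_recursion :
    Nat.card (FAS 0) = 0 ∧ Nat.card (FAS 1) = 3 ∧
      ∀ n : ℕ, 2 ≤ n →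
        Nat.card (FAS n) + (n - 1) * Nat.card (FAS (n - 2))
          = (n + 2) * Nat.card (FAS (n - 1)) + 3 * n := by
  simp only [FAS.card_eq_mul_card_reducedList]
  refine ⟨zero_mul _, ?_, fun n hn => ?_⟩
  · rw [FAS.card_reducedList_fin_succ, FAS.card_reducedList_of_isEmpty]
  · obtain ⟨k, rfl⟩ := Nat.exists_eq_add_of_le' hn
    simp only [Nat.add_sub_cancel, Nat.add_one_sub_one, FAS.card_reducedList_fin_succ]
    ring
end

section
/- Let c_n denote the cardinality of the free associative shelf FAS(n). Then in the ring of formal power series ℚ[[x]], the exponential generating function of (c_n) satisfies (1 − x)^2 · Σ_{n≥0} (c_n/n!) x^n = (3x − x^3) · exp(x). -/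
/-!
In an associative shelf, `x * c * w * c = x * w * c` and `x * c * c * v = x * c * v`. Hence, in a
word with first letter `x`, every later letter that occurs again further on can be deleted, except
when these two occurrences are the last two letters of the word. The words to which no deletion
applies consist of a first letter and a tail which either has distinct letters or arises from such
a nonempty tail by repeating its last letter. Sending a word to its first letter and its reduced
tail is compatible with multiplication and self-distributivity, so different reduced words stay
different.

If `a n` counts the lists of distinct letters over an `n`-letter alphabet, this gives
`c n = n * (2 * a n - 1)`. The exponential generating function `A` of `a` satisfies
`(1 - X) * A = exp`, the one of `c` is `X * (2 * A' - exp)`, and differentiating the first identity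
eliminates `A'`.
-/

/-- An associative shelf: a semigroup whose multiplication is self-distributive from the right. -/
class IsAssociativeShelf (S : Type*) [Semigroup S] : Prop where
  mul_mul_eq (x y z : S) : x * y * z = x * z * (y * z)

namespace IsAssociativeShelf

variable {α S : Type*} [Semigroup S]

theorem foldl_mul_left (g : α → S) (x y : S) (t : List α) :
    t.foldl (fun p a => p * g a) (x * y) = x * t.foldl (fun p a => p * g a) y :=
  List.foldl_hom (x * ·) fun p a => mul_assoc x p (g a)

variable [IsAssociativeShelf S]

theorem mul_mul_mul_absorb (x c w : S) : x * c * w * c = x * w * c := by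
  rw [mul_mul_eq x w c, mul_assoc (x * c)]

theorem mul_mul_self_mul (x c v : S) : x * c * c * v = x * c * v :=
  calc x * c * c * v = x * c * v * (c * v) := mul_mul_eq (x * c) c v
    _ = x * c * v * c * v := (mul_assoc _ c v).symm
    _ = x * v * c * v := by rw [mul_mul_mul_absorb x c v]
    _ = x * v * (c * v) := mul_assoc _ c v
    _ = x * c * v := (mul_mul_eq x c v).symm

theorem foldl_mul_of_mem (g : α → S) (x : S) {c : α} {t : List α} (hc : c ∈ t) (ht : t ≠ [c]) :
    t.foldl (fun p a => p * g a) (x * g c) = t.foldl (fun p a => p * g a) x := by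
  obtain ⟨_ | ⟨d, w⟩, v, rfl⟩ := List.append_of_mem hc
  · obtain _ | ⟨d, v⟩ := v
    · exact absurd rfl ht
    · simp only [List.nil_append, List.foldl_cons, mul_mul_self_mul]
  · simp only [List.cons_append, List.foldl_append, List.foldl_cons, foldl_mul_left,
      mul_mul_mul_absorb]

end IsAssociativeShelf

section Reduction

variable {α : Type*} [DecidableEq α]

/-- The normal form of the tail of a word in an associative shelf: every letter occurring again
later is deleted, except that two equal letters at the very end are kept. -/
def shelfReduce : List α → List α
  | [] => []
  | c :: t => if c ∈ t ∧ t ≠ [c] then shelfReduce t else c :: shelfReduce t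

theorem shelfReduce_cons_of_mem {c : α} {t : List α} (hc : c ∈ t) (ht : t ≠ [c]) :
    shelfReduce (c :: t) = shelfReduce t :=
  if_pos ⟨hc, ht⟩

theorem shelfReduce_cons {c : α} {t : List α} (h : c ∈ t → t = [c]) :
    shelfReduce (c :: t) = c :: shelfReduce t :=
  if_neg fun h' => h'.2 (h h'.1)

theorem shelfReduce_sublist (l : List α) : (shelfReduce l).Sublist l := by
  induction l with
  | nil => exact .slnil
  | cons c t ih =>
    unfold shelfReduce
    split_ifs
    exacts [ih.cons c, ih.cons_cons c]

theorem mem_shelfReduce {a : α} {l : List α} : a ∈ shelfReduce l ↔ a ∈ l := by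
  induction l with
  | nil => rfl
  | cons c t ih =>
    unfold shelfReduce
    split_ifs with h
    · rw [ih, List.mem_cons, iff_or_self]
      rintro rfl
      exact h.1
    · rw [List.mem_cons, List.mem_cons, ih]

theorem shelfReduce_eq_nil_iff {l : List α} : shelfReduce l = [] ↔ l = [] := by
  simp only [List.eq_nil_iff_forall_not_mem, mem_shelfReduce]

theorem shelfReduce_eq_singleton_iff {c : α} {l : List α} : shelfReduce l = [c] ↔ l = [c] := by
  refine ⟨fun h => ?_, fun h => by rw [h]; rfl⟩
  induction l with
  | nil => exact h
  | cons d t ih =>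
    by_cases hd : d ∈ t ∧ t ≠ [d]
    · obtain rfl : t = [c] := ih (by rwa [shelfReduce_cons_of_mem hd.1 hd.2] at h)
      exact absurd (by rw [List.mem_singleton.1 hd.1]) hd.2
    · rwa [shelfReduce, if_neg hd, List.cons.injEq, shelfReduce_eq_nil_iff, ← List.cons.injEq] at h

theorem shelfReduce_cons_congr (c : α) {s t : List α} (h : shelfReduce s = shelfReduce t) :
    shelfReduce (c :: s) = shelfReduce (c :: t) := by
  have hmem : c ∈ s ↔ c ∈ t := by rw [← mem_shelfReduce, h, mem_shelfReduce]
  have hsingle : s = [c] ↔ t = [c] := by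
    rw [← shelfReduce_eq_singleton_iff, h, shelfReduce_eq_singleton_iff]
  simp only [shelfReduce, hmem, hsingle, h, ne_eq]

theorem shelfReduce_append_congr_right (s : List α) {t t' : List α}
    (h : shelfReduce t = shelfReduce t') : shelfReduce (s ++ t) = shelfReduce (s ++ t') := by
  induction s with
  | nil => exact h
  | cons c s ih => exact shelfReduce_cons_congr c ih

theorem shelfReduce_shelfReduce_append (s t : List α) :
    shelfReduce (shelfReduce s ++ t) = shelfReduce (s ++ t) := by
  induction s with
  | nil => rfl
  | cons c s ih =>
    by_cases h : c ∈ s ∧ s ≠ [c]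
    · have happend : s ++ t ≠ [c] := by
        rw [Ne, List.append_eq_singleton_iff]
        rintro (⟨rfl, -⟩ | ⟨hs, -⟩)
        exacts [List.not_mem_nil h.1, h.2 hs]
      rw [shelfReduce_cons_of_mem h.1 h.2, ih, List.cons_append,
        shelfReduce_cons_of_mem (List.mem_append_left t h.1) happend]
    · rw [shelfReduce, if_neg h]
      exact shelfReduce_cons_congr c ih

theorem shelfReduce_append_congr {s s' t t' : List α} (hs : shelfReduce s = shelfReduce s')
    (ht : shelfReduce t = shelfReduce t') : shelfReduce (s ++ t) = shelfReduce (s' ++ t') := by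
  rw [← shelfReduce_shelfReduce_append, hs, shelfReduce_shelfReduce_append,
    shelfReduce_append_congr_right s' ht]

theorem shelfReduce_shelfReduce (l : List α) : shelfReduce (shelfReduce l) = shelfReduce l := by
  simpa only [List.append_nil] using shelfReduce_shelfReduce_append l []

theorem shelfReduce_append_of_subset {s t : List α} (hst : s ⊆ t) (ht : 2 ≤ t.length) :
    shelfReduce (s ++ t) = shelfReduce t := by
  induction s with
  | nil => rfl
  | cons c s ih =>
    rw [List.cons_subset] at hst
    have hlen : s ++ t ≠ [c] := fun h => by
      have := congrArg List.length h
      rw [List.length_append, List.length_singleton] at this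
      lia
    rw [List.cons_append, shelfReduce_cons_of_mem (List.mem_append_right s hst.1) hlen, ih hst.2]

theorem shelfReduce_cons_eq_self_iff {c : α} {t : List α} :
    shelfReduce (c :: t) = c :: t ↔ (c ∈ t → t = [c]) ∧ shelfReduce t = t := by
  refine ⟨fun h => ?_, fun ⟨hc, ht⟩ => by rw [shelfReduce_cons hc, ht]⟩
  have hc : c ∈ t → t = [c] := fun hc => by
    by_contra hne
    have hlen := (shelfReduce_sublist t).length_le
    rw [← shelfReduce_cons_of_mem hc hne, h, List.length_cons] at hlen
    lia
  rw [shelfReduce_cons hc, List.cons.injEq] at h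
  exact ⟨hc, h.2⟩

theorem shelfReduce_eq_self_iff {l : List α} :
    shelfReduce l = l ↔ l.Nodup ∨ ∃ s c, l = s ++ [c, c] ∧ (s ++ [c]).Nodup := by
  induction l with
  | nil => simp [shelfReduce]
  | cons a t ih =>
    rw [shelfReduce_cons_eq_self_iff, ih]
    constructor
    · rintro ⟨ha, ht⟩
      by_cases hat : a ∈ t
      · exact .inr ⟨[], a, by rw [ha hat]; rfl, List.nodup_singleton a⟩
      · rcases ht with ht | ⟨s, c, rfl, hs⟩
        · exact .inl (List.nodup_cons.2 ⟨hat, ht⟩)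
        · exact .inr ⟨a :: s, c, rfl, List.nodup_cons.2 ⟨by simpa using hat, hs⟩⟩
    · rintro (h | ⟨_ | ⟨b, s⟩, c, h, hs⟩)
      · rw [List.nodup_cons] at h
        exact ⟨fun ha => absurd ha h.1, .inl h.2⟩
      · obtain ⟨rfl, rfl⟩ := List.cons.inj h
        exact ⟨fun _ => rfl, .inl hs⟩
      · obtain ⟨rfl, rfl⟩ := List.cons.inj h
        rw [List.cons_append, List.nodup_cons] at hs
        exact ⟨fun ha => absurd (by simpa using ha) hs.1, .inr ⟨s, c, rfl, hs.2⟩⟩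

theorem fixedPoints_shelfReduce :
    Function.fixedPoints (shelfReduce (α := α)) =
      {l | l.Nodup} ∪ {l | ∃ s c, l = s ++ [c, c] ∧ (s ++ [c]).Nodup} :=
  Set.ext fun _ => shelfReduce_eq_self_iff

variable (α) in
/-- Words are related when they have the same first letter and the same reduced tail; this is the
combinatorial description of equality in the free associative shelf. -/
def shelfReduceCon : Con (FreeSemigroup α) where
  r a b := a.head = b.head ∧ shelfReduce a.tail = shelfReduce b.tail
  iseqv := ⟨fun _ => ⟨rfl, rfl⟩, fun h => ⟨h.1.symm, h.2.symm⟩,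
    fun h h' => ⟨h.1.trans h'.1, h.2.trans h'.2⟩⟩
  mul' := fun {a b c d} hab hcd => ⟨hab.1, by
    rw [FreeSemigroup.tail_mul, FreeSemigroup.tail_mul, hcd.1]
    exact shelfReduce_append_congr hab.2 (shelfReduce_cons_congr d.head hcd.2)⟩

theorem shelfReduceCon_mul_mul (x y z : FreeSemigroup α) :
    shelfReduceCon α (x * y * z) (x * z * (y * z)) := by
  refine ⟨rfl, ?_⟩
  simp only [FreeSemigroup.tail_mul, FreeSemigroup.head_mul, List.append_assoc, List.cons_append]
  refine shelfReduce_append_congr_right x.tail (Eq.symm ?_)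
  rw [← List.cons_append]
  refine shelfReduce_append_of_subset ?_ ?_
  · rw [← List.cons_append]
    exact List.subset_append_right _ _
  · simp only [List.length_cons, List.length_append]
    lia

namespace IsAssociativeShelf

variable {S : Type*} [Semigroup S] [IsAssociativeShelf S]

theorem foldl_shelfReduce (g : α → S) (x : S) (t : List α) :
    (shelfReduce t).foldl (fun p a => p * g a) x = t.foldl (fun p a => p * g a) x := by
  induction t generalizing x with
  | nil => rfl
  | cons c t ih =>
    by_cases h : c ∈ t ∧ t ≠ [c]
    · rw [shelfReduce_cons_of_mem h.1 h.2, ih, List.foldl_cons, foldl_mul_of_mem g x h.1 h.2]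
    · rw [shelfReduce, if_neg h, List.foldl_cons, List.foldl_cons, ih]

theorem lift_eq_lift_of_shelfReduceCon (g : α → S) {a b : FreeSemigroup α}
    (h : shelfReduceCon α a b) : FreeSemigroup.lift g a = FreeSemigroup.lift g b := by
  change a.tail.foldl (fun p c => p * g c) (g a.head) = b.tail.foldl (fun p c => p * g c) (g b.head)
  rw [← foldl_shelfReduce, h.1, h.2, foldl_shelfReduce]

end IsAssociativeShelf

end Reduction

section FreeAssociativeShelf

instance (n : ℕ) : IsAssociativeShelf (conGen (shelfRel n)).Quotient where
  mul_mul_eq := by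
    rintro ⟨x⟩ ⟨y⟩ ⟨z⟩
    exact (Con.eq _).2 (.of _ _ ⟨x, y, z, rfl, rfl⟩)

theorem conGen_shelfRel (n : ℕ) : conGen (shelfRel n) = shelfReduceCon (Fin n) := by
  refine le_antisymm (Con.conGen_le.2 ?_) fun a b h => ?_
  · rintro _ _ ⟨x, y, z, rfl, rfl⟩
    exact shelfReduceCon_mul_mul x y z
  · have hmk : (conGen (shelfRel n)).mkMulHom =
        FreeSemigroup.lift ((conGen (shelfRel n)).mkMulHom ∘ FreeSemigroup.of) :=
      (FreeSemigroup.lift_comp_of' _).symm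
    refine (Con.eq _).1 (?_ : (conGen (shelfRel n)).mkMulHom a = (conGen (shelfRel n)).mkMulHom b)
    rw [hmk]
    exact IsAssociativeShelf.lift_eq_lift_of_shelfReduceCon _ h

/-- The normal form of an element of the free associative shelf: a first letter and a reduced
tail. -/
def FAS.equivReduced (n : ℕ) :
    FAS n ≃ Fin n × Function.fixedPoints (shelfReduce (α := Fin n)) where
  toFun := Quotient.lift (fun a => (a.head, ⟨shelfReduce a.tail, shelfReduce_shelfReduce a.tail⟩))
    fun a b h => by
      obtain ⟨hhead, htail⟩ : shelfReduceCon (Fin n) a b := conGen_shelfRel n ▸ h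
      simp only [hhead, htail]
  invFun p := Quotient.mk _ ⟨p.1, p.2⟩
  left_inv := by
    rintro ⟨a⟩
    have h : shelfReduceCon (Fin n) ⟨a.head, shelfReduce a.tail⟩ a :=
      ⟨rfl, shelfReduce_shelfReduce a.tail⟩
    rw [← conGen_shelfRel] at h
    exact Quotient.sound h
  right_inv p := Prod.ext rfl (Subtype.ext p.2.2)

end FreeAssociativeShelf

section Counting

theorem bijOn_dropLast_nodup {α : Type*} :
    Set.BijOn List.dropLast {l : List α | ∃ s c, l = s ++ [c, c] ∧ (s ++ [c]).Nodup}
      ({l | l.Nodup} \ {[]}) := by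
  have hdrop (s : List α) (c : α) : (s ++ [c, c]).dropLast = s ++ [c] := by
    rw [List.append_cons, List.dropLast_concat]
  refine ⟨?_, ?_, ?_⟩
  · rintro _ ⟨s, c, rfl, hs⟩
    rw [hdrop]
    exact ⟨hs, List.append_ne_nil_of_right_ne_nil s (List.cons_ne_nil c [])⟩
  · rintro _ ⟨s, c, rfl, -⟩ _ ⟨s', c', rfl, -⟩ h
    rw [hdrop, hdrop] at h
    obtain ⟨rfl, hc⟩ := List.append_inj' h rfl
    rw [List.singleton_inj.1 hc]
  · rintro l ⟨hl, hne⟩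
    obtain ⟨s, c, rfl⟩ := List.eq_nil_or_concat' l |>.resolve_left hne
    exact ⟨s ++ [c, c], ⟨s, c, rfl, hl⟩, hdrop s c⟩

theorem ncard_fixedPoints_shelfReduce_add_one {α : Type*} [DecidableEq α] [Finite α] :
    (Function.fixedPoints (shelfReduce (α := α))).ncard + 1 = 2 * {l : List α | l.Nodup}.ncard := by
  have := Fintype.ofFinite α
  have hnil : [] ∈ {l : List α | l.Nodup} := List.nodup_nil
  have hfinite : {l : List α | l.Nodup}.Finite := Set.finite_coe_iff.1 fintypeNodupList.finite
  have hdisjoint : Disjoint {l : List α | l.Nodup}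
      {l | ∃ s c, l = s ++ [c, c] ∧ (s ++ [c]).Nodup} := by
    rw [Set.disjoint_left]
    rintro _ hl ⟨s, c, rfl, -⟩
    exact List.not_nodup_pair c (List.Nodup.of_append_right hl)
  rw [fixedPoints_shelfReduce, Set.ncard_union_eq hdisjoint hfinite
    (bijOn_dropLast_nodup.finite_iff_finite.2 hfinite.sdiff), add_assoc,
    bijOn_dropLast_nodup.ncard_eq, Set.ncard_sdiff_singleton_add_one hnil hfinite, two_mul]

/-- The number of lists of distinct elements, of any length, in a set with `n` elements. -/
def numArrangements (n : ℕ) : ℕ :=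
  ∑ k ∈ Finset.range (n + 1), n.descFactorial k

theorem numArrangements_succ (n : ℕ) :
    numArrangements (n + 1) = (n + 1) * numArrangements n + 1 := by
  simp only [numArrangements, Finset.sum_range_succ' _ (n + 1), Nat.succ_descFactorial_succ,
    Finset.mul_sum, Nat.descFactorial_zero]

theorem ncard_setOf_nodup (α : Type*) [Fintype α] :
    {l : List α | l.Nodup}.ncard = numArrangements (Fintype.card α) := by
  have hlength {l : List α} (hl : l.Nodup) : l.length < Fintype.card α + 1 :=
    Nat.lt_succ_of_le hl.length_le_card
  let toList (p : Σ k : Fin (Fintype.card α + 1), Fin k ↪ α) : {l : List α | l.Nodup} :=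
    ⟨List.ofFn p.2, List.nodup_ofFn.2 p.2.injective⟩
  have hbijective : toList.Bijective := by
    constructor
    · rintro ⟨⟨k, hk⟩, f⟩ ⟨⟨m, hm⟩, g⟩ h
      obtain ⟨hkm, hfg⟩ := Sigma.mk.inj (List.ofFn_inj'.1 (congrArg Subtype.val h))
      dsimp only at hkm
      subst hkm
      exact congrArg (Sigma.mk _) (DFunLike.coe_injective (eq_of_heq hfg))
    · rintro ⟨l, hl⟩
      exact ⟨⟨⟨l.length, hlength hl⟩, l.get, List.nodup_iff_injective_get.1 hl⟩,
        Subtype.ext (List.ofFn_get l)⟩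
  rw [← Nat.card_coe_set_eq, ← Nat.card_congr (.ofBijective toList hbijective),
    Nat.card_eq_fintype_card, Fintype.card_sigma, numArrangements, Finset.sum_range]
  simp only [Fintype.card_embedding_eq, Fintype.card_fin]

theorem card_FAS_add (n : ℕ) : Nat.card (FAS n) + n = 2 * n * numArrangements n := by
  rw [Nat.card_congr (FAS.equivReduced n), Nat.card_prod, Nat.card_fin, Nat.card_coe_set_eq,
    ← Nat.mul_succ, Nat.succ_eq_add_one, ncard_fixedPoints_shelfReduce_add_one, ncard_setOf_nodup,
    Fintype.card_fin]
  ring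

end Counting

section GeneratingFunction

open PowerSeries

/-- The exponential generating function of `numArrangements`. -/
noncomputable def arrangementEGF : ℚ⟦X⟧ :=
  PowerSeries.mk fun n => (numArrangements n : ℚ) / n.factorial

theorem one_sub_X_mul_arrangementEGF : (1 - X) * arrangementEGF = PowerSeries.exp ℚ := by
  ext (_ | n)
  · simp [arrangementEGF, sub_mul, numArrangements]
  · have := Nat.cast_ne_zero (R := ℚ).2 n.factorial_ne_zero
    simp only [arrangementEGF, sub_mul, one_mul, map_sub, coeff_mk, coeff_succ_X_mul, coeff_exp,
      numArrangements_succ, Nat.factorial_succ, eq_ratCast, Rat.cast_div]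
    push_cast
    field_simp
    ring

theorem one_sub_X_mul_derivative_arrangementEGF :
    (1 - X) * d⁄dX ℚ arrangementEGF = arrangementEGF + PowerSeries.exp ℚ := by
  have h := congrArg (d⁄dX ℚ) one_sub_X_mul_arrangementEGF
  rw [Derivation.leibniz, map_sub, Derivation.map_one_eq_zero, derivative_X, derivative_exp,
    smul_eq_mul, smul_eq_mul] at h
  linear_combination h

theorem egf_card_FAS :
    PowerSeries.mk (fun n => (Nat.card (FAS n) : ℚ) / n.factorial) =
      X * (2 * d⁄dX ℚ arrangementEGF - PowerSeries.exp ℚ) := by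
  ext n
  have hcard : (Nat.card (FAS n) : ℚ) = n * (2 * numArrangements n - 1) := by
    have := congrArg (Nat.cast (R := ℚ)) (card_FAS_add n)
    push_cast at this
    linear_combination this
  rcases n with _ | n
  · simp [hcard]
  · rw [coeff_mk, hcard, coeff_succ_X_mul, map_sub, two_mul (d⁄dX ℚ _), map_add, coeff_derivative,
      arrangementEGF, coeff_mk, coeff_exp, Nat.factorial_succ]
    have := Nat.cast_ne_zero (R := ℚ).2 n.factorial_ne_zero
    simp only [eq_ratCast, Rat.cast_div]
    push_cast
    field_simp
    ring

end GeneratingFunction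

open PowerSeries in
/-- With `c n = Nat.card (FAS n)`, in `ℚ[[x]]` we have
`(1 - x)² · Σ (c n / n!) xⁿ = (3x - x³) · exp x`. -/
theorem FAS_card_egf :
    (1 - (X : ℚ⟦X⟧)) ^ 2
        * PowerSeries.mk (fun n => (Nat.card (FAS n) : ℚ) / n.factorial)
      = (3 * (X : ℚ⟦X⟧) - (X : ℚ⟦X⟧) ^ 3) * PowerSeries.exp ℚ := by
  rw [egf_card_FAS]
  linear_combination
    2 * X * (1 - X) * one_sub_X_mul_derivative_arrangementEGF + 2 * X * one_sub_X_mul_arrangementEGF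
end

section
/- For every n ≥ 1, the free proto-unital shelf FPUS(n) is finite with cardinality n + Σ_{k=1}^n k!·C(n,k) (equivalently, n − 1 + Σ_{k=0}^n k!·C(n,k)). -/
/-- The defining relations of a proto-unital shelf on the free semigroup on `n`
generators: self-distributivity `(x*y)*z ~ (x*z)*(y*z)`, and the identities
`x*y ~ y*(x*y)` and `x*y ~ (x*y)*y`. -/
def pusRel (n : ℕ) : FreeSemigroup (Fin n) → FreeSemigroup (Fin n) → Prop :=
  fun a b =>
    (∃ x y z : FreeSemigroup (Fin n), a = (x * y) * z ∧ b = (x * z) * (y * z)) ∨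
    (∃ x y : FreeSemigroup (Fin n), a = x * y ∧ b = y * (x * y)) ∨
    (∃ x y : FreeSemigroup (Fin n), a = x * y ∧ b = (x * y) * y)

/-- The free proto-unital shelf on `n` generators. -/
def FPUS (n : ℕ) : Type := (conGen (pusRel n)).Quotient

/-!
In a semigroup with `y * (x * y) = x * y` and `x * y * y = x * y`, which is automatically
self-distributive, a product of at least two generators only depends on the order of the *last*
occurrences of its letters. Conversely, the generators together with the nonempty duplicate-free
words form such a semigroup, where multiplying concatenates and keeps last occurrences; hence it is
the free one. There are `k! * n.choose k` duplicate-free words of length `k`, and the extra summand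
`n` appears because a generator `a` differs from `a * a`, whose normal form is the word `[a]`.
-/

/-- The identities that make a semigroup a proto-unital shelf; self-distributivity is left out
because associativity and `left_absorb` imply it. -/
class IsProtoUnital (S : Type*) [Mul S] : Prop where
  left_absorb (x y : S) : y * (x * y) = x * y
  right_absorb (x y : S) : x * y * y = x * y

namespace IsProtoUnital

variable {S : Type*} [Semigroup S] [IsProtoUnital S]

theorem self_distrib (x y z : S) : x * y * z = x * z * (y * z) := by
  rw [mul_assoc, mul_assoc, left_absorb]

theorem self_mul_mul (x y : S) : x * (x * y) = x * y :=
  calc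
    x * (x * y) = x * (y * (x * y)) := by rw [left_absorb x y]
    _ = x * y * (y * (x * y)) := by rw [left_absorb x y, mul_assoc, left_absorb x y]
    _ = x * y := by rw [left_absorb y (x * y), left_absorb x y]

end IsProtoUnital

open IsProtoUnital

theorem list_union_assoc {α : Type*} [DecidableEq α] (l₁ l₂ l₃ : List α) :
    l₁ ∪ l₂ ∪ l₃ = l₁ ∪ (l₂ ∪ l₃) := by
  induction l₁ with
  | nil => simp only [List.nil_union]
  | cons a t ih =>
    rw [List.cons_union, List.cons_union, ← ih]
    by_cases h : a ∈ t ∪ l₂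
    · rw [List.insert_of_mem h, List.insert_of_mem (List.mem_union_iff.2 (.inl h))]
    · rw [List.insert_of_not_mem h, List.cons_union]

/-- The elements of the free proto-unital shelf on `α` in normal form: a single generator, or a
product of at least two generators, recorded by the nonempty list of its distinct letters in the
order of their last occurrences. -/
def NormalForm (α : Type*) : Type _ := α ⊕ {l : List α // l.Nodup ∧ l ≠ []}

namespace NormalForm

variable {α : Type*}

/-- The generator `a`, as opposed to the singleton list `[a]`, which is `of a * of a`. -/
def of (a : α) : NormalForm α := .inl a

/-- The normal form of a product of at least two generators with list of last occurrences `l`. -/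
def ofList (l : List α) (hl : l.Nodup ∧ l ≠ []) : NormalForm α := .inr ⟨l, hl⟩

/-- The letters of a normal form, in the order of their last occurrences. -/
def letters : NormalForm α → List α
  | .inl a => [a]
  | .inr l => l

theorem nodup_letters : ∀ x : NormalForm α, x.letters.Nodup
  | .inl a => List.nodup_singleton a
  | .inr l => l.2.1

theorem letters_ne_nil : ∀ x : NormalForm α, x.letters ≠ []
  | .inl a => List.cons_ne_nil a []
  | .inr l => l.2.2

theorem ofList_congr {l l' : List α} {hl : l.Nodup ∧ l ≠ []} {hl' : l'.Nodup ∧ l' ≠ []}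
    (h : l = l') : ofList l hl = ofList l' hl' := by
  subst h
  rfl

section Eval

variable {S T : Type*}

/-- The product `g a₁ * (⋯ * (g aₖ * g aₖ))` over a nonempty list. The repeated last factor makes it
a product of at least two generators, even for `k = 1`. -/
def listEval [Mul S] (g : α → S) : (l : List α) → l ≠ [] → S
  | [a], _ => g a * g a
  | a :: b :: l, _ => g a * listEval g (b :: l) (List.cons_ne_nil b l)

/-- The value of a normal form under an assignment of the generators. -/
def eval [Mul S] (g : α → S) : NormalForm α → S
  | .inl a => g a
  | .inr l => listEval g l l.2.2

theorem listEval_cons [Mul S] (g : α → S) (a : α) {l : List α} (hl : l ≠ []) :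
    listEval g (a :: l) (List.cons_ne_nil a l) = g a * listEval g l hl := by
  cases l with
  | nil => exact absurd rfl hl
  | cons b l => rfl

theorem map_listEval [Mul S] [Mul T] (f : S →ₙ* T) (g : α → S) :
    ∀ {l : List α} (hl : l ≠ []), f (listEval g l hl) = listEval (f ∘ g) l hl
  | [_], _ => map_mul f _ _
  | _ :: b :: l, _ => by
    rw [listEval, listEval, map_mul, map_listEval f g (List.cons_ne_nil b l), Function.comp_apply]

theorem map_eval [Mul S] [Mul T] (f : S →ₙ* T) (g : α → S) :
    ∀ x : NormalForm α, f (eval g x) = eval (f ∘ g) x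
  | .inl _ => rfl
  | .inr l => map_listEval f g l.2.2

variable [Semigroup S] [IsProtoUnital S]

theorem mul_listEval_of_mem (g : α → S) {a : α} :
    ∀ {l : List α} (hl : l ≠ []), a ∈ l → g a * listEval g l hl = listEval g l hl
  | [b], _, h => by
    rw [List.mem_singleton.1 h]
    exact self_mul_mul (g b) (g b)
  | b :: c :: l, _, h => by
    rcases List.mem_cons.1 h with rfl | h
    · exact self_mul_mul _ _
    · set z := listEval g (c :: l) (List.cons_ne_nil c l)
      have absorb : g a * z = z := mul_listEval_of_mem g (List.cons_ne_nil c l) h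
      calc
        g a * (g b * z) = g a * (g b * (g a * z)) := by rw [absorb]
        _ = g a * (g b * g a) * z := by simp only [mul_assoc]
        _ = g b * g a * z := by rw [left_absorb]
        _ = g b * z := by rw [mul_assoc, absorb]

theorem listEval_insert [DecidableEq α] (g : α → S) (a : α) {l : List α} (hl : l ≠ [])
    (hal : l.insert a ≠ []) :
    listEval g (l.insert a) hal = g a * listEval g l hl := by
  by_cases ha : a ∈ l
  · simp only [List.insert_of_mem ha, mul_listEval_of_mem g hl ha]
  · simp only [List.insert_of_not_mem ha, listEval_cons g a hl]

end Eval

variable [DecidableEq α]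

-- `k ∪ l` prepends to `l` the letters of `k` not in `l`, keeping the last occurrence of each:
-- it is `(k ++ l).dedup` for duplicate-free `l`.
instance : Mul (NormalForm α) where
  mul x y := ofList (x.letters ∪ y.letters)
    ⟨y.nodup_letters.union _, List.ne_nil_of_mem <| List.mem_union_iff.2 <|
      .inl <| List.head_mem x.letters_ne_nil⟩

theorem letters_mul (x y : NormalForm α) : (x * y).letters = x.letters ∪ y.letters := rfl

instance : Semigroup (NormalForm α) where
  mul_assoc x y z := ofList_congr (list_union_assoc x.letters y.letters z.letters)

instance : IsProtoUnital (NormalForm α) where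
  left_absorb x y := ofList_congr <|
    List.Subset.union_eq_right fun _ h => List.mem_union_iff.2 (.inr h)
  right_absorb x y := ofList_congr <| by
    rw [letters_mul, list_union_assoc, List.Subset.union_eq_right (List.Subset.refl _)]

theorem eval_of_mul {S : Type*} [Semigroup S] [IsProtoUnital S] (g : α → S) (a : α) :
    ∀ x : NormalForm α, eval g (of a * x) = g a * eval g x
  | .inl b =>
    calc
      eval g (of a * of b) = g a * (g b * g b) := listEval_insert g a (List.cons_ne_nil b []) _
      _ = g a * g b := by rw [← mul_assoc, right_absorb]
  | .inr l => listEval_insert g a l.2.2 _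

theorem eval_lift_of {S : Type*} [Semigroup S] [IsProtoUnital S] (g : α → S)
    (w : FreeSemigroup α) :
    eval g (FreeSemigroup.lift of w) = FreeSemigroup.lift g w := by
  induction w with
  | ih1 a => rfl
  | ih2 a w _ ih => rw [FreeSemigroup.lift_of_mul, FreeSemigroup.lift_of_mul, eval_of_mul, ih]

theorem listEval_of : ∀ {l : List α} (hl : l.Nodup ∧ l ≠ []), listEval of l hl.2 = ofList l hl
  | [a], hl => ofList_congr (List.Subset.union_eq_right (List.Subset.refl _))
  | a :: b :: l, hl => by
    rw [listEval, listEval_of ⟨hl.1.of_cons, List.cons_ne_nil b l⟩]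
    exact ofList_congr (List.insert_of_not_mem (List.nodup_cons.1 hl.1).1)

theorem eval_of : ∀ x : NormalForm α, eval of x = x
  | .inl _ => rfl
  | .inr l => listEval_of l.2

end NormalForm

section NodupLists

variable (α : Type*) [Fintype α]

/-- Duplicate-free nonempty lists sorted by length. -/
def nodupListEquivSigma : {l : List α // l.Nodup ∧ l ≠ []} ≃
    Σ k : Finset.Icc 1 (Fintype.card α), {v : List.Vector α k // v.toList.Nodup} where
  toFun l := ⟨⟨l.1.length, Finset.mem_Icc.2 ⟨List.length_pos_iff.2 l.2.2, l.2.1.length_le_card⟩⟩,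
    ⟨l, rfl⟩, l.2.1⟩
  invFun v := ⟨v.2.1.toList, v.2.2, List.ne_nil_of_length_pos <| by
    rw [v.2.1.toList_length]
    exact (Finset.mem_Icc.1 v.1.2).1⟩
  left_inv _ := rfl
  right_inv := by
    rintro ⟨⟨k, hk⟩, ⟨l, hl⟩, hnodup⟩
    dsimp only at hl
    subst hl
    rfl

theorem card_nodup_vector (k : ℕ) :
    Nat.card {v : List.Vector α k // v.toList.Nodup} =
      k.factorial * (Fintype.card α).choose k := by
  have e : {v : List.Vector α k // v.toList.Nodup} ≃ (Fin k ↪ α) :=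
    ((Equiv.vectorEquivFin α k).subtypeEquiv fun _ => List.Vector.nodup_iff_injective_get).trans
      (Equiv.subtypeInjectiveEquivEmbedding (Fin k) α)
  rw [Nat.card_congr e, Nat.card_eq_fintype_card, Fintype.card_embedding_eq, Fintype.card_fin,
    Nat.descFactorial_eq_factorial_mul_choose]

end NodupLists

namespace NormalForm

variable (α : Type*)

/-- Normal forms sorted into generators and products, the latter by their number of letters. -/
def equivSum [Fintype α] : NormalForm α ≃
    α ⊕ Σ k : Finset.Icc 1 (Fintype.card α), {v : List.Vector α k // v.toList.Nodup} :=
  (Equiv.refl α).sumCongr (nodupListEquivSigma α)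

instance [Finite α] : Finite (NormalForm α) := by
  cases nonempty_fintype α
  exact Finite.of_equiv _ (equivSum α).symm

theorem natCard_eq [Fintype α] :
    Nat.card (NormalForm α) = Fintype.card α +
      ∑ k ∈ Finset.Icc 1 (Fintype.card α), k.factorial * (Fintype.card α).choose k := by
  rw [Nat.card_congr (equivSum α), Nat.card_sum, Nat.card_eq_fintype_card, Nat.card_sigma]
  simp only [card_nodup_vector]
  rw [Finset.sum_coe_sort _ fun k => k.factorial * (Fintype.card α).choose k]

end NormalForm

namespace FPUS

variable {n : ℕ}

instance : Semigroup (FPUS n) := inferInstanceAs (Semigroup (conGen (pusRel n)).Quotient)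

/-- The quotient map from the free semigroup. -/
def mk : FreeSemigroup (Fin n) →ₙ* FPUS n := (conGen (pusRel n)).mkMulHom

theorem mk_surjective : Function.Surjective (mk (n := n)) := Quotient.mk_surjective

theorem mk_eq_mk_of_pusRel {v w : FreeSemigroup (Fin n)} (h : pusRel n v w) : mk v = mk w :=
  (Con.eq _).2 (ConGen.Rel.of _ _ h)

instance : IsProtoUnital (FPUS n) where
  left_absorb := mk_surjective.forall₂.2 fun v w =>
    (mk_eq_mk_of_pusRel (.inr (.inl ⟨v, w, rfl, rfl⟩))).symm
  right_absorb := mk_surjective.forall₂.2 fun v w =>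
    (mk_eq_mk_of_pusRel (.inr (.inr ⟨v, w, rfl, rfl⟩))).symm

theorem conGen_pusRel_le_ker {S : Type*} [Semigroup S] [IsProtoUnital S]
    (f : FreeSemigroup (Fin n) →ₙ* S) : conGen (pusRel n) ≤ Con.ker f := by
  refine Con.conGen_le.2 fun v w h => (Con.ker_rel f).2 ?_
  rcases h with ⟨x, y, z, rfl, rfl⟩ | ⟨x, y, rfl, rfl⟩ | ⟨x, y, rfl, rfl⟩ <;> simp only [map_mul]
  · exact self_distrib _ _ _
  · exact (left_absorb _ _).symm
  · exact (right_absorb _ _).symm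

/-- The homomorphism induced on `FPUS n` by an assignment of the generators. -/
def lift {S : Type*} [Semigroup S] [IsProtoUnital S] (g : Fin n → S) : FPUS n →ₙ* S where
  toFun q := Con.liftOn q (FreeSemigroup.lift g) fun _ _ h => conGen_pusRel_le_ker _ h
  map_mul' := mk_surjective.forall₂.2 fun v w => map_mul (FreeSemigroup.lift g) v w

theorem eval_lift_of (q : FPUS n) :
    NormalForm.eval (mk ∘ FreeSemigroup.of) (lift NormalForm.of q) = q := by
  obtain ⟨w, rfl⟩ := mk_surjective q
  exact (NormalForm.eval_lift_of _ w).trans (DFunLike.congr_fun (FreeSemigroup.lift_comp_of' mk) w)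

theorem lift_of_eval (x : NormalForm (Fin n)) :
    lift NormalForm.of (NormalForm.eval (mk ∘ FreeSemigroup.of) x) = x :=
  (NormalForm.map_eval _ _ x).trans (NormalForm.eval_of x)

/-- The elements of `FPUS n` correspond to their normal forms. -/
def equivNormalForm (n : ℕ) : FPUS n ≃* NormalForm (Fin n) where
  __ := lift NormalForm.of
  invFun := NormalForm.eval (mk ∘ FreeSemigroup.of)
  left_inv := eval_lift_of
  right_inv := lift_of_eval

end FPUS

/-- For `n ≥ 1`, the free proto-unital shelf `FPUS(n)` is finite with
cardinality `n + Σ_{k=1}^n k!·C(n,k)`. -/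
theorem FPUS_card (n : ℕ) (hn : 1 ≤ n) :
    Finite (FPUS n) ∧
      Nat.card (FPUS n) = n + ∑ k ∈ Finset.Icc 1 n, k.factorial * n.choose k := by
  have e := (FPUS.equivNormalForm n).toEquiv
  refine ⟨Finite.of_equiv _ e.symm, ?_⟩
  rw [Nat.card_congr e, NormalForm.natCard_eq, Fintype.card_fin]
end

section
/- For every natural number n, the free pre-unital shelf on n generators is finite with cardinality b_n = Σ_{k=1}^n k!·C(n,k). -/
/-- The defining relations of a pre-unital shelf on the free semigroup on `n`
generators: self-distributivity `(x*y)*z ~ (x*z)*(y*z)`, idempotence `x ~ x*x`,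
and the identities `x*y ~ y*(x*y)` and `x*y ~ (x*y)*y`. -/
def preRel (n : ℕ) : FreeSemigroup (Fin n) → FreeSemigroup (Fin n) → Prop :=
  fun a b =>
    (∃ x y z : FreeSemigroup (Fin n), a = (x * y) * z ∧ b = (x * z) * (y * z)) ∨
    (∃ x : FreeSemigroup (Fin n), a = x ∧ b = x * x) ∨
    (∃ x y : FreeSemigroup (Fin n), a = x * y ∧ b = y * (x * y)) ∨
    (∃ x y : FreeSemigroup (Fin n), a = x * y ∧ b = (x * y) * y)

/-- The free pre-unital shelf on `n` generators. -/
def FPtildeUS (n : ℕ) : Type := (conGen (preRel n)).Quotient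

/-!
The identities of a pre-unital shelf say exactly that the semigroup is a right regular band:
idempotent with `y * (x * y) = x * y`. In a right regular band every factor of a product absorbs a
further copy of itself on the left, so in a word only the last occurrence of each letter matters.
Conversely, concatenation followed by deleting all but the last occurrences is a right regular
band operation. Hence the free pre-unital shelf is the set of nonempty words without repeated
letters, and there are `k! * n.choose k` of these of length `k`.
-/

/-- A right regular band, as a predicate on a multiplication: an idempotent semigroup with
`y * x * y = x * y`. These are the semigroups satisfying the identities of a pre-unital shelf. -/
structure IsRightRegularBand (S : Type*) [Mul S] : Prop where
  mul_self (x : S) : x * x = x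
  mul_mul_self (x y : S) : y * (x * y) = x * y

namespace IsRightRegularBand

theorem withOne {S : Type*} [Mul S] (hS : IsRightRegularBand S) :
    IsRightRegularBand (WithOne S) where
  mul_self x := by
    cases x with
    | one => rfl
    | coe x => rw [← WithOne.coe_mul, hS.mul_self]
  mul_mul_self x y := by
    cases y with
    | one => simp only [one_mul]
    | coe y =>
      cases x with
      | one => rw [one_mul, ← WithOne.coe_mul, hS.mul_self]
      | coe x => rw [← WithOne.coe_mul, ← WithOne.coe_mul, hS.mul_mul_self]

theorem mul_prod_of_mem {M : Type*} [Monoid M] (hM : IsRightRegularBand M) {a : M} {l : List M}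
    (ha : a ∈ l) : a * l.prod = l.prod := by
  obtain ⟨s, t, rfl⟩ := List.append_of_mem ha
  calc a * (s ++ a :: t).prod = a * (s.prod * a) * t.prod := by
        simp only [List.prod_append, List.prod_cons, mul_assoc]
    _ = s.prod * a * t.prod := by rw [hM.mul_mul_self]
    _ = (s ++ a :: t).prod := by simp only [List.prod_append, List.prod_cons, mul_assoc]

theorem prod_map_dedup {α M : Type*} [DecidableEq α] [Monoid M] (hM : IsRightRegularBand M)
    (f : α → M) (l : List α) : (l.dedup.map f).prod = (l.map f).prod := by
  induction l with
  | nil => rfl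
  | cons a l ih =>
    by_cases ha : a ∈ l
    · rw [List.dedup_cons_of_mem ha, ih, List.map_cons, List.prod_cons,
        hM.mul_prod_of_mem (List.mem_map_of_mem ha)]
    · rw [List.dedup_cons_of_notMem ha, List.map_cons, List.map_cons, List.prod_cons,
        List.prod_cons, ih]

end IsRightRegularBand

theorem isRightRegularBand_quotient_iff {S : Type*} [Mul S] {c : Con S} :
    IsRightRegularBand c.Quotient ↔
      (∀ x, c (x * x) x) ∧ ∀ x y, c (y * (x * y)) (x * y) := by
  constructor
  · intro h
    exact ⟨fun x ↦ c.eq.1 (h.mul_self x), fun x y ↦ c.eq.1 (h.mul_mul_self x y)⟩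
  · rintro ⟨hself, hmul⟩
    exact ⟨fun x ↦ Con.induction_on x fun x ↦ c.eq.2 (hself x),
      fun x y ↦ Con.induction_on₂ x y fun x y ↦ c.eq.2 (hmul x y)⟩

theorem conGen_preRel_le_iff {n : ℕ} {c : Con (FreeSemigroup (Fin n))} :
    conGen (preRel n) ≤ c ↔ IsRightRegularBand c.Quotient := by
  rw [Con.conGen_le, isRightRegularBand_quotient_iff]
  constructor
  · intro h
    exact ⟨fun x ↦ c.symm (h _ _ (.inr (.inl ⟨x, rfl, rfl⟩))),
      fun x y ↦ c.symm (h _ _ (.inr (.inr (.inl ⟨x, y, rfl, rfl⟩))))⟩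
  · rintro ⟨hself, hmul⟩ a b
      (⟨x, y, z, rfl, rfl⟩ | ⟨x, rfl, rfl⟩ | ⟨x, y, rfl, rfl⟩ | ⟨x, y, rfl, rfl⟩)
    · simpa only [mul_assoc] using c.symm (c.mul (c.refl x) (hmul y z))
    · exact c.symm (hself _)
    · exact c.symm (hmul x y)
    · simpa only [mul_assoc] using c.symm (c.mul (c.refl x) (hself y))

theorem coe_map_eq_prod {α S : Type*} [Semigroup S] (f : FreeSemigroup α →ₙ* S)
    (w : FreeSemigroup α) :
    (f w : WithOne S) = (w.toFreeMonoid.toList.map fun a ↦ (f (.of a) : WithOne S)).prod := by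
  have h : WithOne.coeMulHom.comp f =
      ((FreeMonoid.lift fun a ↦ (f (.of a) : WithOne S)) : FreeMonoid α →ₙ* WithOne S).comp
        FreeSemigroup.toFreeMonoid :=
    FreeSemigroup.hom_ext rfl
  exact (DFunLike.congr_fun h w).trans (FreeMonoid.lift_apply _ _)

/-- Nonempty words without repeated letters (injective words in the combinatorial literature);
the normal forms of the elements of a free right regular band. -/
abbrev InjectiveWord (α : Type*) : Type _ := {l : List α // l.Nodup ∧ l ≠ []}

section Dedup

variable {α : Type*} [DecidableEq α]

theorem dedup_union_eq_union (l m : List α) : l.dedup ∪ m = l ∪ m := by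
  induction l with
  | nil => rfl
  | cons a l ih =>
    by_cases ha : a ∈ l
    · rw [List.dedup_cons_of_mem ha, ih, List.cons_union,
        List.insert_of_mem (List.mem_union_iff.2 (.inl ha))]
    · rw [List.dedup_cons_of_notMem ha, List.cons_union, List.cons_union, ih]

theorem dedup_append_eq_union (l m : List α) : (l ++ m).dedup = l.dedup ∪ m.dedup := by
  rw [List.dedup_append, dedup_union_eq_union]

/-- The normal form of a word: only the last occurrence of each letter is kept. -/
def dedupWord (w : FreeSemigroup α) : InjectiveWord α :=
  ⟨w.toFreeMonoid.toList.dedup, List.nodup_dedup _, by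
    rw [Ne, List.dedup_eq_nil]
    exact w.toFreeMonoid_ne_one⟩

theorem coe_dedupWord_mul (u v : FreeSemigroup α) :
    (dedupWord (u * v)).1 = (dedupWord u).1 ∪ (dedupWord v).1 := by
  simp only [dedupWord, map_mul, FreeMonoid.toList_mul, dedup_append_eq_union]

theorem dedupWord_mul_eq_right {u v : FreeSemigroup α}
    (h : u.toFreeMonoid.toList ⊆ v.toFreeMonoid.toList) : dedupWord (u * v) = dedupWord v := by
  apply Subtype.ext
  simp only [dedupWord, map_mul, FreeMonoid.toList_mul]
  exact h.dedup_append_right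

theorem dedupWord_surjective : Function.Surjective (dedupWord (α := α)) := by
  rintro ⟨_ | ⟨a, l⟩, hnodup, hne⟩
  · exact absurd rfl hne
  · refine ⟨⟨a, l⟩, Subtype.ext ?_⟩
    simp only [dedupWord, FreeSemigroup.toFreeMonoid_mk_eq_cons, FreeMonoid.toList_ofList]
    exact hnodup.dedup

variable (α) in
/-- The congruence identifying words with the same normal form, whose quotient is the free right
regular band on `α`. -/
def dedupCon : Con (FreeSemigroup α) where
  toSetoid := Setoid.ker dedupWord
  mul' {u u' v v'} hu hv := by
    apply Subtype.ext
    rw [coe_dedupWord_mul, coe_dedupWord_mul, Setoid.ker_def.1 hu, Setoid.ker_def.1 hv]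

variable (α) in
theorem isRightRegularBand_quotient_dedupCon : IsRightRegularBand (dedupCon α).Quotient := by
  refine isRightRegularBand_quotient_iff.2
    ⟨fun x ↦ dedupWord_mul_eq_right (List.Subset.refl _), fun x y ↦ dedupWord_mul_eq_right ?_⟩
  rw [map_mul, FreeMonoid.toList_mul]
  exact List.subset_append_right _ _

theorem IsRightRegularBand.map_eq_of_dedupCon {S : Type*} [Semigroup S]
    (hS : IsRightRegularBand S) (f : FreeSemigroup α →ₙ* S) {u v : FreeSemigroup α}
    (h : dedupCon α u v) : f u = f v := by
  apply WithOne.coe_injective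
  have hdedup : u.toFreeMonoid.toList.dedup = v.toFreeMonoid.toList.dedup :=
    congrArg Subtype.val h
  rw [coe_map_eq_prod, coe_map_eq_prod, ← hS.withOne.prod_map_dedup, hdedup,
    hS.withOne.prod_map_dedup]

theorem dedupCon_le_iff {c : Con (FreeSemigroup α)} :
    dedupCon α ≤ c ↔ IsRightRegularBand c.Quotient := by
  constructor
  · intro h
    obtain ⟨hself, hmul⟩ :=
      isRightRegularBand_quotient_iff.1 (isRightRegularBand_quotient_dedupCon α)
    exact isRightRegularBand_quotient_iff.2 ⟨fun x ↦ h (hself x), fun x y ↦ h (hmul x y)⟩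
  · intro hc u v huv
    exact c.eq.1 (hc.map_eq_of_dedupCon c.mkMulHom huv)

end Dedup

theorem conGen_preRel_eq_dedupCon (n : ℕ) : conGen (preRel n) = dedupCon (Fin n) :=
  eq_of_forall_ge_iff fun _ ↦ conGen_preRel_le_iff.trans dedupCon_le_iff.symm

/-- The free pre-unital shelf on `n` generators as the set of normal forms of its elements. -/
noncomputable def FPtildeUS.equivInjectiveWord (n : ℕ) : FPtildeUS n ≃ InjectiveWord (Fin n) :=
  (Quotient.congrRight fun u v ↦ by
    exact Con.ext_iff.1 (conGen_preRel_eq_dedupCon n) u v).trans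
    (Setoid.quotientKerEquivOfSurjective dedupWord dedupWord_surjective)

section Counting

variable (α : Type*)

/-- Nodup vectors of length `k` as embeddings of `Fin k`. -/
def nodupVectorEquivEmbedding (k : ℕ) :
    {v : List.Vector α k // v.toList.Nodup} ≃ (Fin k ↪ α) :=
  ((Equiv.vectorEquivFin α k).subtypeEquiv fun _ ↦ List.Vector.nodup_iff_injective_get).trans
    (Equiv.subtypeInjectiveEquivEmbedding (Fin k) α)

/-- Injective words of positive length `k` as embeddings of `Fin k`. -/
def injectiveWordEquivEmbedding {k : ℕ} (hk : 0 < k) :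
    {w : InjectiveWord α // w.1.length = k} ≃ (Fin k ↪ α) :=
  Equiv.trans
    { toFun w := ⟨⟨w.1.1, w.2⟩, w.1.2.1⟩
      invFun v := ⟨⟨v.1.1, v.2, List.length_pos_iff.1 (v.1.2.symm ▸ hk)⟩, v.1.2⟩ }
    (nodupVectorEquivEmbedding α k)

variable {α}

instance [Finite α] : Finite (InjectiveWord α) := by
  cases nonempty_fintype α
  exact Finite.of_injective _
    (Subtype.impEmbedding _ List.Nodup fun _ (h : _ ∧ _) ↦ h.1).injective

theorem InjectiveWord.length_mem_Icc [Fintype α] (w : InjectiveWord α) :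
    w.1.length ∈ Finset.Icc 1 (Fintype.card α) :=
  Finset.mem_Icc.2 ⟨List.length_pos_iff.2 w.2.2, w.2.1.length_le_card⟩

theorem card_injectiveWord_length_eq [Fintype α] {k : ℕ} (hk : 0 < k) :
    Nat.card {w : InjectiveWord α // w.1.length = k} =
      k.factorial * (Fintype.card α).choose k := by
  rw [Nat.card_congr (injectiveWordEquivEmbedding α hk), Nat.card_eq_fintype_card,
    Fintype.card_embedding_eq, Fintype.card_fin, Nat.descFactorial_eq_factorial_mul_choose]

theorem card_injectiveWord [Fintype α] :
    Nat.card (InjectiveWord α) =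
      ∑ k ∈ Finset.Icc 1 (Fintype.card α), k.factorial * (Fintype.card α).choose k := by
  have := Fintype.ofFinite (InjectiveWord α)
  rw [Nat.card_eq_fintype_card, ← Finset.card_univ,
    Finset.card_eq_sum_card_fiberwise fun w _ ↦ w.length_mem_Icc]
  refine Finset.sum_congr rfl fun k hk ↦ ?_
  rw [← Fintype.card_subtype, ← Nat.card_eq_fintype_card,
    card_injectiveWord_length_eq (Finset.mem_Icc.1 hk).1]

end Counting

/-- For every `n`, the free pre-unital shelf on `n` generators is
finite with cardinality `Σ_{k=1}^n k!·C(n,k)`. -/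
theorem FPtildeUS_card (n : ℕ) :
    Finite (FPtildeUS n) ∧
      Nat.card (FPtildeUS n) = ∑ k ∈ Finset.Icc 1 n, k.factorial * n.choose k := by
  let e := FPtildeUS.equivInjectiveWord n
  refine ⟨Finite.of_equiv _ e.symm, ?_⟩
  rw [Nat.card_congr e, card_injectiveWord, Fintype.card_fin]
end

section
/- For every natural number n, the free unital shelf FUS(n) is finite with cardinality Σ_{k=0}^n k!·C(n,k). -/
/-- The self-distributivity relation on the free monoid on `n` generators:
`(x*y)*z` is related to `(x*z)*(y*z)`. -/
def shelfRelM (n : ℕ) : FreeMonoid (Fin n) → FreeMonoid (Fin n) → Prop :=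
  fun a b => ∃ x y z : FreeMonoid (Fin n), a = (x * y) * z ∧ b = (x * z) * (y * z)

/-- The free unital shelf on `n` generators: the quotient of the free monoid on
`n` generators by the smallest multiplicative congruence containing the
self-distributivity relation. -/
def FUS (n : ℕ) : Type := (conGen (shelfRelM n)).Quotient

/-!
Taking `x = 1` in right self-distributivity gives `z * (y * z) = y * z`, so in any unital shelf a
letter that occurs again further right may be deleted, and every word equals the word of its last
occurrences. No two repetition-free words get identified: the free monoid acts on lists by letting
a letter insert itself at the front unless it is already present, this action factors through the
free unital shelf, and a repetition-free word is recovered by acting on the empty list. It remains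
to count repetition-free words by length.
-/

open Finset

/-- Right self-distributivity of a multiplication. Monoids with this property are the
unital shelves, since associativity is automatic in a unital shelf. -/
def RightSelfDistributive (M : Type*) [Mul M] : Prop :=
  ∀ x y z : M, x * y * z = x * z * (y * z)

namespace RightSelfDistributive

variable {M : Type*} [Monoid M]

theorem mul_mul_self (hM : RightSelfDistributive M) (y z : M) : z * (y * z) = y * z := by
  simpa using (hM 1 y z).symm

theorem mul_prod_of_mem (hM : RightSelfDistributive M) {a : M} {l : List M} (ha : a ∈ l) :
    a * l.prod = l.prod := by
  obtain ⟨s, t, rfl⟩ := List.append_of_mem ha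
  calc a * (s ++ a :: t).prod
      = a * (s.prod * a) * t.prod := by simp [mul_assoc]
    _ = s.prod * a * t.prod := by rw [hM.mul_mul_self]
    _ = (s ++ a :: t).prod := by simp [mul_assoc]

theorem prod_map_dedup (hM : RightSelfDistributive M) {α : Type*} [DecidableEq α] (f : α → M)
    (l : List α) : (l.dedup.map f).prod = (l.map f).prod := by
  induction l with
  | nil => rfl
  | cons a l ih =>
    by_cases ha : a ∈ l
    · rw [List.dedup_cons_of_mem ha, ih, List.map_cons, List.prod_cons,
        hM.mul_prod_of_mem (List.mem_map_of_mem ha)]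
    · simp [List.dedup_cons_of_notMem ha, ih]

end RightSelfDistributive

/-- The smallest congruence on `M` whose quotient is right self-distributive. -/
def selfDistribCon (M : Type*) [Mul M] : Con M :=
  conGen fun a b => ∃ x y z : M, a = x * y * z ∧ b = x * z * (y * z)

theorem rightSelfDistributive_quotient_selfDistribCon (M : Type*) [Mul M] :
    RightSelfDistributive (selfDistribCon M).Quotient := by
  rintro ⟨x⟩ ⟨y⟩ ⟨z⟩
  exact (Con.eq _).2 (.of _ _ ⟨x, y, z, rfl, rfl⟩)

/-- The free unital shelf on the alphabet `α`, as a quotient of the free monoid;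
`FUS n` is the case `α = Fin n`. -/
abbrev FreeUnitalShelf (α : Type*) : Type _ := (selfDistribCon (FreeMonoid α)).Quotient

section NormalForm

variable {α : Type*} [DecidableEq α]

variable (α) in
/-- The left action of words on lists, in which a letter inserts itself at the front of a list
unless it already occurs there. -/
def unionHom : FreeMonoid α →* Function.End (List α) where
  toFun w l := w.toList ∪ l
  map_one' := funext List.nil_union
  map_mul' _ _ := funext fun _ => List.foldr_append

theorem selfDistribCon_le_ker_unionHom :
    selfDistribCon (FreeMonoid α) ≤ Con.ker (unionHom α) := by
  refine Con.conGen_le.2 ?_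
  rintro _ _ ⟨x, y, z, rfl, rfl⟩
  have absorb : unionHom α z * (unionHom α y * unionHom α z) = unionHom α y * unionHom α z := by
    funext l
    have hz : z.toList ⊆ y.toList ∪ (z.toList ∪ l) := fun a ha => by simp [ha]
    exact hz.union_eq_right
  simp only [Con.ker_rel, map_mul, mul_assoc, absorb]

theorem dedup_eq_of_selfDistribCon {v w : FreeMonoid α}
    (h : selfDistribCon (FreeMonoid α) v w) : v.toList.dedup = w.toList.dedup := by
  have dedup_eq_action_nil (u : FreeMonoid α) : u.toList.dedup = unionHom α u [] :=
    calc u.toList.dedup = (u.toList ++ []).dedup := by rw [List.append_nil]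
      _ = unionHom α u [] := List.dedup_append _ []
  have action_eq : unionHom α v = unionHom α w := selfDistribCon_le_ker_unionHom h
  rw [dedup_eq_action_nil, dedup_eq_action_nil, action_eq]

theorem mk'_ofList_dedup (w : FreeMonoid α) :
    (selfDistribCon _).mk' (FreeMonoid.ofList w.toList.dedup) = (selfDistribCon _).mk' w := by
  have mk'_eq_prod (l : List α) : (selfDistribCon _).mk' (FreeMonoid.ofList l) =
      (l.map fun a => (selfDistribCon _).mk' (FreeMonoid.of a)).prod := by
    induction l with
    | nil => rfl
    | cons a l ih => rw [FreeMonoid.ofList_cons, map_mul, ih, List.map_cons, List.prod_cons]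
  rw [mk'_eq_prod,
    (rightSelfDistributive_quotient_selfDistribCon (FreeMonoid α)).prod_map_dedup,
    ← mk'_eq_prod, FreeMonoid.ofList_toList]

/-- The normal form of an element of the free unital shelf: the list of last occurrences of the
letters in any word representing it. -/
def freeUnitalShelfEquivNodup : FreeUnitalShelf α ≃ {l : List α // l.Nodup} where
  toFun q := Con.liftOn q (fun w => ⟨w.toList.dedup, List.nodup_dedup _⟩)
    fun _ _ h => Subtype.ext (dedup_eq_of_selfDistribCon h)
  invFun l := (selfDistribCon _).mk' (FreeMonoid.ofList l)
  left_inv := by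
    rintro ⟨w⟩
    exact mk'_ofList_dedup w
  right_inv l := Subtype.ext l.2.dedup

end NormalForm

section Counting

variable {α : Type*} [Fintype α]

theorem card_nodup_list_length_eq (k : ℕ) :
    Nat.card {l : {l : List α // l.Nodup} // l.1.length = k} =
      (Fintype.card α).descFactorial k := by
  let ofEmbedding (f : Fin k ↪ α) : {l : {l : List α // l.Nodup} // l.1.length = k} :=
    ⟨⟨List.ofFn f, List.nodup_ofFn.2 f.injective⟩, List.length_ofFn⟩
  have injective : Function.Injective ofEmbedding := fun f g h =>
    DFunLike.coe_injective (List.ofFn_injective (congrArg (fun l => l.1.1) h))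
  have surjective : Function.Surjective ofEmbedding := by
    rintro ⟨⟨l, hl⟩, rfl⟩
    exact ⟨⟨l.get, hl.injective_get⟩, Subtype.ext (Subtype.ext (List.ofFn_get l))⟩
  rw [← Nat.card_eq_of_bijective _ ⟨injective, surjective⟩, Nat.card_eq_fintype_card,
    Fintype.card_embedding_eq, Fintype.card_fin]

variable (α) in
theorem card_nodup_list : Nat.card {l : List α // l.Nodup} =
    ∑ k ∈ range (Fintype.card α + 1), k.factorial * (Fintype.card α).choose k := by
  classical
  have length_mem (l : {l : List α // l.Nodup}) : l.1.length ∈ range (Fintype.card α + 1) :=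
    mem_range_succ_iff.2 l.2.length_le_card
  calc Nat.card {l : List α // l.Nodup}
      = Fintype.card {l : List α // l.Nodup} := Nat.card_eq_fintype_card
    _ = ∑ k ∈ range (Fintype.card α + 1), #{l : {l : List α // l.Nodup} | l.1.length = k} :=
        card_eq_sum_card_fiberwise fun l _ => length_mem l
    _ = ∑ k ∈ range (Fintype.card α + 1), (Fintype.card α).descFactorial k := by
        simp only [← Fintype.card_subtype, ← Nat.card_eq_fintype_card,
          card_nodup_list_length_eq]
    _ = ∑ k ∈ range (Fintype.card α + 1), k.factorial * (Fintype.card α).choose k := by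
        simp only [Nat.descFactorial_eq_factorial_mul_choose]

end Counting

theorem FUS_card_general (α : Type*) [Fintype α] :
    Finite (FreeUnitalShelf α) ∧
      Nat.card (FreeUnitalShelf α) =
        ∑ k ∈ range (Fintype.card α + 1), k.factorial * (Fintype.card α).choose k := by
  classical
  refine ⟨.of_equiv _ freeUnitalShelfEquivNodup.symm, ?_⟩
  rw [Nat.card_congr freeUnitalShelfEquivNodup, card_nodup_list]

/-- For every `n`, the free unital shelf `FUS(n)` is finite with
cardinality `Σ_{k=0}^n k!·C(n,k)`. -/
theorem FUS_card (n : ℕ) :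
    Finite (FUS n) ∧
      Nat.card (FUS n) = ∑ k ∈ Finset.range (n + 1), k.factorial * n.choose k := by
  have h := FUS_card_general (Fin n)
  rwa [Fintype.card_fin] at h
end

section
/- Let α be a type with decidable equality, and on lists over α define w₁ ⋄ w₂ := (the sublist of w₁ consisting of letters not occurring in w₂) ++ w₂, i.e. w₁ ⋄ w₂ = w₁.filter (· ∉ w₂) ++ w₂. Then ⋄ is right self-distributive ((u ⋄ v) ⋄ w = (u ⋄ w) ⋄ (v ⋄ w)), associative, idempotent (w ⋄ w = w), and satisfies u ⋄ v = v ⋄ (u ⋄ v) and (u ⋄ v) ⋄ v = u ⋄ v for all lists u, v, w. In particular, lists over α with the operation ⋄ form a pre-unital shelf. -/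
/-- The operation `w₁ ⋄ w₂ = w₁.filter (· ∉ w₂) ++ w₂` on lists. -/
def listOp {α : Type*} [DecidableEq α] (u v : List α) : List α :=
  u.filter (fun a => decide (a ∉ v)) ++ v

theorem right_selfDistrib_of_assoc_of_absorb {β : Type*} {op : β → β → β} [Std.Associative op]
    (absorb : ∀ x y, op y (op x y) = op x y) (x y z : β) :
    op (op x y) z = op (op x z) (op y z) :=
  calc op (op x y) z
    _ = op x (op y z) := Std.Associative.assoc x y z
    _ = op x (op z (op y z)) := by rw [absorb y z]
    _ = op (op x z) (op y z) := (Std.Associative.assoc x z (op y z)).symm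

section ListOp

variable {α : Type*} [DecidableEq α]

theorem mem_listOp {a : α} {u v : List α} : a ∈ listOp u v ↔ a ∈ u ∨ a ∈ v := by
  by_cases hv : a ∈ v <;> simp [listOp, hv]

theorem listOp_eq_right_iff_subset {u v : List α} : listOp u v = v ↔ u ⊆ v := by
  simp [listOp, List.subset_def]

theorem listOp_self (w : List α) : listOp w w = w :=
  listOp_eq_right_iff_subset.2 (List.Subset.refl w)

theorem listOp_absorb (u v : List α) : listOp v (listOp u v) = listOp u v :=
  listOp_eq_right_iff_subset.2 fun _ hv => mem_listOp.2 (Or.inr hv)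

theorem listOp_assoc (u v w : List α) : listOp (listOp u v) w = listOp u (listOp v w) := by
  have filter_twice : (u.filter (· ∉ v)).filter (· ∉ w) = u.filter (· ∉ listOp v w) := by
    rw [List.filter_filter]
    exact List.filter_congr fun a _ => by simp [mem_listOp, Bool.and_comm]
  calc listOp (listOp u v) w
    _ = (u.filter (· ∉ v)).filter (· ∉ w) ++ listOp v w := by
      simp only [listOp, List.filter_append, List.append_assoc]
    _ = listOp u (listOp v w) := congrArg (· ++ listOp v w) filter_twice

instance : Std.Associative (listOp (α := α)) := ⟨listOp_assoc⟩

theorem listOp_right_idem (u v : List α) : listOp (listOp u v) v = listOp u v := by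
  rw [listOp_assoc, listOp_self]

end ListOp

/-- Lists over a type with decidable equality, with the operation
`w₁ ⋄ w₂ = w₁.filter (· ∉ w₂) ++ w₂`, form a pre-unital shelf: the operation is
right self-distributive, associative, idempotent, and satisfies
`u ⋄ v = v ⋄ (u ⋄ v)` and `(u ⋄ v) ⋄ v = u ⋄ v`. -/
theorem lists_form_pre_unital_shelf {α : Type*} [DecidableEq α] :
    (∀ u v w : List α, listOp (listOp u v) w = listOp (listOp u w) (listOp v w)) ∧
    (∀ u v w : List α, listOp (listOp u v) w = listOp u (listOp v w)) ∧
    (∀ w : List α, listOp w w = w) ∧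
    (∀ u v : List α, listOp u v = listOp v (listOp u v)) ∧
    (∀ u v : List α, listOp (listOp u v) v = listOp u v) := by
  exact ⟨right_selfDistrib_of_assoc_of_absorb listOp_absorb,
    listOp_assoc,
    listOp_self,
    fun u v => (listOp_absorb u v).symm,
    listOp_right_idem⟩
end

section
/- Let (X,*) be a shelf and let r, c ∈ X satisfy x*r = c for all x ∈ X (r is a right c-fixed element). For n ≥ 0 let C_n be the free abelian group on the set X^{n+1} of (n+1)-tuples, and let the two-term (rack) boundary ∂_n : C_n → C_{n-1} (n ≥ 1) be the ℤ-linear map sending a generator (x_0,…,x_n) to Σ_{i=1}^n (−1)^i [ (x_0,…,x_{i-1},x_{i+1},…,x_n) − (x_0*x_i, x_1*x_i, …, x_{i-1}*x_i, x_{i+1},…,x_n) ], with ∂_0 := 0. Define f_n : C_n → C_{n+1} ℤ-linearly by f_n(x_0,…,x_n) = (−1)^{n+1}(x_0,…,x_n,r), and let α_n : C_n → C_n be the ℤ-linear map sending every generator to (c,c,…,c). Then for every n ≥ 0, ∂_{n+1} ∘ f_n + f_{n-1} ∘ ∂_n = id_{C_n} − α_n (where the term f_{-1} ∘ ∂_0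 is interpreted as 0 when n = 0); i.e., f is a chain homotopy between the identity and the constant chain map onto (c,…,c). -/
namespace RackHomology

variable {X : Type*}

/-- The chain module `C_n`: the free abelian group (as a `ℤ`-module) on the set of
`(n+1)`-tuples of elements of `X`. -/
abbrev C (X : Type*) (n : ℕ) : Type _ := (Fin (n + 1) → X) →₀ ℤ

/-- The `i`-th face map for the trivial operation: delete the `i`-th coordinate. -/
def dTriv {n : ℕ} (i : Fin (n + 2)) (x : Fin (n + 2) → X) : Fin (n + 1) → X :=
  fun j => x (i.succAbove j)

/-- The `i`-th face map for the operation `op`: delete the `i`-th coordinate and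
act by `x_i` on the right on all earlier coordinates. -/
def dOp (op : X → X → X) {n : ℕ} (i : Fin (n + 2)) (x : Fin (n + 2) → X) :
    Fin (n + 1) → X :=
  fun j => if (j : ℕ) < (i : ℕ) then op (x (Fin.castSucc j)) (x i) else x (i.succAbove j)

/-- The two-term (rack) boundary map `∂_{n+1} : C_{n+1} → C_n`, sending a generator
`(x_0, …, x_{n+1})` to
`Σ_{i=1}^{n+1} (−1)^i [(x_0,…,x̂_i,…,x_{n+1}) − (x_0*x_i,…,x_{i-1}*x_i,x_{i+1},…,x_{n+1})]`. -/
noncomputable def rackBoundary (op : X → X → X) (n : ℕ) :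
    C X (n + 1) →ₗ[ℤ] C X n :=
  Finsupp.lift (C X n) ℤ (Fin (n + 2) → X) fun x =>
    ∑ i ∈ Finset.univ.filter (fun i : Fin (n + 2) => i ≠ 0),
      ((-1 : ℤ) ^ (i : ℕ)) •
        (Finsupp.single (dTriv i x) 1 - Finsupp.single (dOp op i x) 1)

/-- The chain homotopy `f_n : C_n → C_{n+1}`, sending a generator `(x_0, …, x_n)`
to `(−1)^{n+1} (x_0, …, x_n, r)`. -/
noncomputable def homotopy (r : X) (n : ℕ) : C X n →ₗ[ℤ] C X (n + 1) :=
  Finsupp.lift (C X (n + 1)) ℤ (Fin (n + 1) → X) fun x =>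
    ((-1 : ℤ) ^ (n + 1)) • Finsupp.single (Fin.snoc x r) 1

/-- The constant chain map `α_n : C_n → C_n`, sending every generator to
`(c, c, …, c)`. -/
noncomputable def constMap (c : X) (n : ℕ) : C X n →ₗ[ℤ] C X n :=
  Finsupp.lift (C X n) ℤ (Fin (n + 1) → X) fun _ =>
    Finsupp.single (fun _ => c) 1

/-! Appending `r` commutes with every face except the last, so the signs built into the homotopy
make all these terms of `∂ f + f ∂` cancel. The last faces of `(x_0, …, x_n, r)` are
`(x_0, …, x_n)` and `(x_0*r, …, x_n*r)`: `f` is a homotopy from the identity to right translation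
by `r`, which is the constant map when `r` is right `c`-fixed. -/

/-- The difference of the two `i`-th faces of a tuple, so that
`∂ x = Σ_{i ≥ 1} (-1)^i faceDiff op i x`. -/
noncomputable def faceDiff (op : X → X → X) {n : ℕ} (i : Fin (n + 2)) (x : Fin (n + 2) → X) :
    C X n :=
  Finsupp.single (dTriv i x) 1 - Finsupp.single (dOp op i x) 1

/-- The `ℤ`-linear map `C_n → C_n` induced by right translation,
`(x_0, …, x_n) ↦ (x_0*r, …, x_n*r)`. -/
noncomputable def rightTranslation (op : X → X → X) (r : X) (n : ℕ) : C X n →ₗ[ℤ] C X n :=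
  Finsupp.lmapDomain ℤ ℤ fun x j => op (x j) r

theorem rightTranslation_single (op : X → X → X) (r : X) {n : ℕ} (x : Fin (n + 1) → X) :
    rightTranslation op r n (Finsupp.single x 1) =
      Finsupp.single (fun j => op (x j) r) 1 := by
  simp [rightTranslation]

theorem rightTranslation_eq_constMap {op : X → X → X} {r c : X} (hr : ∀ x, op x r = c) (n : ℕ) :
    rightTranslation op r n = constMap c n := by
  refine Finsupp.lhom_ext' fun x => LinearMap.ext_ring ?_
  simp [rightTranslation_single, constMap, hr]

theorem homotopy_single (r : X) {n : ℕ} (x : Fin (n + 1) → X) :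
    homotopy r n (Finsupp.single x 1) =
      (-1 : ℤ) ^ (n + 1) • Finsupp.single (Fin.snoc x r) 1 := by
  rw [homotopy, Finsupp.lift_apply, Finsupp.sum_single_index (by simp), one_smul]

theorem rackBoundary_single (op : X → X → X) {n : ℕ} (x : Fin (n + 2) → X) :
    rackBoundary op n (Finsupp.single x 1) =
      ∑ i : Fin (n + 1), (-1 : ℤ) ^ ((i : ℕ) + 1) • faceDiff op i.succ x := by
  simp [rackBoundary, faceDiff, Finset.sum_filter, Fin.sum_univ_succ (n := n + 1)]

theorem dTriv_last_snoc {n : ℕ} (x : Fin (n + 1) → X) (r : X) :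
    dTriv (Fin.last (n + 1)) (Fin.snoc x r : Fin (n + 2) → X) = x := by
  funext j
  simp [dTriv]

theorem dOp_last_snoc (op : X → X → X) {n : ℕ} (x : Fin (n + 1) → X) (r : X) :
    dOp op (Fin.last (n + 1)) (Fin.snoc x r : Fin (n + 2) → X) = fun j => op (x j) r := by
  funext j
  have hj : (j : ℕ) < n + 1 := j.isLt
  simp only [dOp, Fin.val_last, if_pos hj, Fin.snoc_castSucc, Fin.snoc_last]

theorem dTriv_castSucc_snoc {n : ℕ} (i : Fin (n + 2)) (x : Fin (n + 2) → X) (r : X) :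
    dTriv i.castSucc (Fin.snoc x r : Fin (n + 3) → X) = Fin.snoc (dTriv i x) r := by
  funext j
  cases j using Fin.lastCases <;> simp [dTriv, Fin.castSucc_succAbove_castSucc]

theorem dOp_castSucc_snoc (op : X → X → X) {n : ℕ} (i : Fin (n + 2)) (x : Fin (n + 2) → X)
    (r : X) :
    dOp op i.castSucc (Fin.snoc x r : Fin (n + 3) → X) = Fin.snoc (dOp op i x) r := by
  funext j
  cases j using Fin.lastCases with
  | last =>
    have hi : ¬ n + 1 < (i : ℕ) := by omega
    simp [dOp, hi]
  | cast k => simp [dOp, Fin.castSucc_succAbove_castSucc]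

theorem faceDiff_last_snoc (op : X → X → X) (r : X) {n : ℕ} (x : Fin (n + 1) → X) :
    faceDiff op (Fin.last (n + 1)) (Fin.snoc x r : Fin (n + 2) → X) =
      Finsupp.single x 1 - rightTranslation op r n (Finsupp.single x 1) := by
  rw [faceDiff, dTriv_last_snoc, dOp_last_snoc, rightTranslation_single]

theorem homotopy_faceDiff (op : X → X → X) (r : X) {n : ℕ} (i : Fin (n + 2))
    (x : Fin (n + 2) → X) :
    homotopy r n (faceDiff op i x) =
      (-1 : ℤ) ^ (n + 1) • faceDiff op i.castSucc (Fin.snoc x r : Fin (n + 3) → X) := by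
  simp only [faceDiff, map_sub, homotopy_single, dTriv_castSucc_snoc, dOp_castSucc_snoc, smul_sub]

theorem homotopy_rackBoundary_single (op : X → X → X) (r : X) {n : ℕ} (x : Fin (n + 2) → X) :
    homotopy r n (rackBoundary op n (Finsupp.single x 1)) =
      (-1 : ℤ) ^ (n + 1) • ∑ i : Fin (n + 1), (-1 : ℤ) ^ ((i : ℕ) + 1) •
        faceDiff op i.succ.castSucc (Fin.snoc x r : Fin (n + 3) → X) := by
  simp only [rackBoundary_single, map_sum, map_smul, homotopy_faceDiff, Finset.smul_sum,
    smul_comm ((-1 : ℤ) ^ (n + 1))]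

theorem rackBoundary_homotopy_single (op : X → X → X) (r : X) {n : ℕ} (x : Fin (n + 1) → X) :
    rackBoundary op n (homotopy r n (Finsupp.single x 1)) =
      (-1 : ℤ) ^ (n + 1) • ∑ i : Fin n, (-1 : ℤ) ^ ((i : ℕ) + 1) •
          faceDiff op i.succ.castSucc (Fin.snoc x r : Fin (n + 2) → X) +
        (Finsupp.single x 1 - rightTranslation op r n (Finsupp.single x 1)) := by
  have sign_sq : (-1 : ℤ) ^ (n + 1) * (-1) ^ (n + 1) = 1 := by simp [← mul_pow]
  rw [homotopy_single, map_smul, rackBoundary_single, Fin.sum_univ_castSucc, Fin.succ_last,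
    faceDiff_last_snoc, smul_add, Fin.val_last, smul_smul _ _ (_ - _), sign_sq, one_smul]
  simp only [Fin.succ_castSucc, Fin.val_castSucc]

theorem chain_homotopy_of_right_fixed_general (op : X → X → X) (r : X) :
    (rackBoundary op 0 ∘ₗ homotopy r 0 = LinearMap.id - rightTranslation op r 0) ∧
    (∀ n : ℕ,
      rackBoundary op (n + 1) ∘ₗ homotopy r (n + 1)
          + homotopy r n ∘ₗ rackBoundary op n
        = LinearMap.id - rightTranslation op r (n + 1)) := by
  refine ⟨Finsupp.lhom_ext' fun x => LinearMap.ext_ring ?_,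
    fun n => Finsupp.lhom_ext' fun x => LinearMap.ext_ring ?_⟩
  · simp [rackBoundary_homotopy_single]
  · simp only [LinearMap.comp_apply, Finsupp.lsingle_apply, LinearMap.add_apply,
      LinearMap.sub_apply, LinearMap.id_apply, rackBoundary_homotopy_single,
      homotopy_rackBoundary_single, pow_succ _ (n + 1)]
    module

/-- Let `(X,*)` be a shelf with a right `c`-fixed element `r`
(`x*r = c` for all `x`). Then the maps `f_n` form a chain homotopy between the
identity and the constant chain map onto `(c,…,c)`:
`∂_1 ∘ f_0 = id − α_0`, and for all `n`,
`∂_{n+2} ∘ f_{n+1} + f_n ∘ ∂_{n+1} = id − α_{n+1}`. -/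
theorem chain_homotopy_of_right_fixed (op : X → X → X)
    (sd : ∀ a b c : X, op (op a b) c = op (op a c) (op b c))
    (r c : X) (hr : ∀ x : X, op x r = c) :
    (rackBoundary op 0 ∘ₗ homotopy r 0 = LinearMap.id - constMap c 0) ∧
    (∀ n : ℕ,
      rackBoundary op (n + 1) ∘ₗ homotopy r (n + 1)
          + homotopy r n ∘ₗ rackBoundary op n
        = LinearMap.id - constMap c (n + 1)) := by
  simpa only [rightTranslation_eq_constMap hr] using
    chain_homotopy_of_right_fixed_general op r

end RackHomology
end

section
/- Let (X,*) be a unital shelf with unit 1. For n ≥ 0 let C_n be the free abelian group on X^{n+1}, and let the one-term boundary ∂_n : C_n → C_{n-1} (n ≥ 1) be the ℤ-linear map sending a generator (x_0,…,x_n) to Σ_{i=0}^n (−1)^i d_i(x_0,…,x_n), where d_0(x_0,…,x_n) = (x_1,…,x_n) and, for 1 ≤ i ≤ n, d_i(x_0,…,x_n) = (x_0*x_i, x_1*x_i, …, x_{i-1}*x_i, x_{i+1},…,x_n). Then for every n ≥ 1, ker(∂_n) = im(∂_{n+1}); i.e., unital shelves have trivial one-term homology in all positive dimensions. -/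
/-! Let `R` be the chain map induced by right translation by `e`. Appending `e` to tuples commutes
with all face maps but the last: the last face of the extended tuple is the image of the original
one under `R`. Hence, up to sign, appending `e` is a homotopy from `R` to zero in positive degrees.
If right translation by `e` is bijective then `R` is an automorphism of the chain complex, so the
homology vanishes there; for a unit `e`, `R` is the identity. -/

namespace OneTermHomology

variable {X : Type*}

/-- The chain module `C_n`: the free abelian group (as a `ℤ`-module) on the set of
`(n+1)`-tuples of elements of `X`. -/
abbrev C (X : Type*) (n : ℕ) : Type _ := (Fin (n + 1) → X) →₀ ℤ

/-- The `i`-th one-term face map for the operation `op`: delete the `i`-th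
coordinate and act by `x_i` on the right on all earlier coordinates.  For `i = 0`
this is `(x_0, …, x_n) ↦ (x_1, …, x_n)`, and for `i ≥ 1` it is
`(x_0, …, x_n) ↦ (x_0*x_i, …, x_{i-1}*x_i, x_{i+1}, …, x_n)`. -/
def dOp (op : X → X → X) {n : ℕ} (i : Fin (n + 2)) (x : Fin (n + 2) → X) :
    Fin (n + 1) → X :=
  fun j => if (j : ℕ) < (i : ℕ) then op (x (Fin.castSucc j)) (x i) else x (i.succAbove j)

/-- The one-term boundary map `∂_{n+1} : C_{n+1} → C_n`, sending a generator
`(x_0, …, x_{n+1})` to `Σ_{i=0}^{n+1} (−1)^i d_i(x_0, …, x_{n+1})`. -/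
noncomputable def oneBoundary (op : X → X → X) (n : ℕ) :
    C X (n + 1) →ₗ[ℤ] C X n :=
  Finsupp.lift (C X n) ℤ (Fin (n + 2) → X) fun x =>
    ∑ i : Fin (n + 2), ((-1 : ℤ) ^ (i : ℕ)) • Finsupp.single (dOp op i x) 1

theorem dOp_of_castSucc_lt (op : X → X → X) {n : ℕ} {i : Fin (n + 2)} {j : Fin (n + 1)}
    (h : j.castSucc < i) (x : Fin (n + 2) → X) : dOp op i x j = op (x j.castSucc) (x i) :=
  if_pos h

theorem dOp_of_le_castSucc (op : X → X → X) {n : ℕ} {i : Fin (n + 2)} {j : Fin (n + 1)}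
    (h : i ≤ j.castSucc) (x : Fin (n + 2) → X) : dOp op i x j = x j.succ :=
  (if_neg h.not_gt).trans (congrArg x (Fin.succAbove_of_le_castSucc i j h))

theorem dOp_dOp_succ_of_le (op : X → X → X)
    (sd : ∀ a b c : X, op (op a b) c = op (op a c) (op b c)) {n : ℕ} {i j : Fin (n + 2)}
    (hij : i ≤ j) (x : Fin (n + 3) → X) :
    dOp op i (dOp op j.succ x) = dOp op j (dOp op i.castSucc x) := by
  have hi : i.castSucc < j.succ := Fin.castSucc_lt_succ_iff.mpr hij
  funext k
  rcases lt_or_ge k.castSucc i with hki | hik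
  · have hkj : k.castSucc < j := hki.trans_le hij
    have hkj' : k.castSucc.castSucc < j.succ := (Fin.castSucc_lt_castSucc_iff.mpr hki).trans hi
    rw [dOp_of_castSucc_lt op hki, dOp_of_castSucc_lt op hkj', dOp_of_castSucc_lt op hi,
      dOp_of_castSucc_lt op hkj, dOp_of_castSucc_lt op (Fin.castSucc_lt_castSucc_iff.mpr hki),
      dOp_of_le_castSucc op (Fin.castSucc_le_castSucc_iff.mpr hij), ← sd]
  · have hik' : i.castSucc ≤ k.castSucc.castSucc := Fin.castSucc_le_castSucc_iff.mpr hik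
    rw [dOp_of_le_castSucc op hik]
    rcases lt_or_ge k.castSucc j with hkj | hjk
    · rw [dOp_of_castSucc_lt op hkj, dOp_of_castSucc_lt op (Fin.succ_lt_succ_iff.mpr hkj),
        dOp_of_le_castSucc op hik', dOp_of_le_castSucc op (Fin.castSucc_le_castSucc_iff.mpr hij),
        Fin.succ_castSucc]
    · have hik_succ : i.castSucc ≤ k.succ.castSucc :=
        hik'.trans (Fin.castSucc_le_castSucc_iff.mpr k.castSucc_lt_succ.le)
      rw [dOp_of_le_castSucc op hjk, dOp_of_le_castSucc op (Fin.succ_le_succ_iff.mpr hjk),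
        dOp_of_le_castSucc op hik_succ]

theorem dOp_predAbove_dOp_succAbove (op : X → X → X)
    (sd : ∀ a b c : X, op (op a b) c = op (op a c) (op b c)) {n : ℕ} (i : Fin (n + 3))
    (j : Fin (n + 2)) (x : Fin (n + 3) → X) :
    dOp op (j.predAbove i) (dOp op (i.succAbove j) x) = dOp op j (dOp op i x) := by
  rcases le_or_gt i j.castSucc with hij | hji
  · obtain ⟨i, rfl⟩ := Fin.exists_castSucc_eq.mpr (hij.trans_lt j.castSucc_lt_last).ne
    rw [Fin.castSucc_le_castSucc_iff] at hij
    rw [Fin.succAbove_castSucc_of_le _ _ hij, Fin.predAbove_castSucc_of_le _ _ hij,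
      dOp_dOp_succ_of_le op sd hij]
  · obtain ⟨i, rfl⟩ := Fin.exists_succ_eq_of_ne_zero (Fin.ne_zero_of_lt hji)
    rw [Fin.castSucc_lt_succ_iff] at hji
    rw [Fin.succAbove_succ_of_le _ _ hji, Fin.predAbove_succ_of_le _ _ hji,
      dOp_dOp_succ_of_le op sd hji]

theorem sum_sum_neg_one_pow_smul_eq_zero {M : Type*} [AddCommGroup M] {n : ℕ}
    (F : Fin (n + 1) → Fin n → M) (hF : ∀ i j, F (i.succAbove j) (j.predAbove i) = F i j) :
    ∑ i : Fin (n + 1), ∑ j : Fin n, (-1 : ℤ) ^ (i + j : ℕ) • F i j = 0 := by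
  rw [← Fintype.sum_prod_type']
  refine Finset.sum_involution (fun p _ => (p.1.succAbove p.2, p.2.predAbove p.1)) ?_ ?_
    (fun _ _ => Finset.mem_univ _) ?_
  · rintro ⟨i, j⟩ -
    rw [Fin.neg_one_pow_succAbove_add_predAbove, hF, neg_smul, add_neg_cancel]
  · rintro ⟨i, j⟩ - - h
    exact Fin.succAbove_ne i j (congrArg Prod.fst h)
  · rintro ⟨i, j⟩ -
    exact Prod.ext (Fin.succAbove_succAbove_predAbove i j) (Fin.predAbove_predAbove_succAbove i j)

theorem oneBoundary_single (op : X → X → X) (n : ℕ) (x : Fin (n + 2) → X) :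
    oneBoundary op n (Finsupp.single x 1) =
      ∑ i : Fin (n + 2), (-1 : ℤ) ^ (i : ℕ) • Finsupp.single (dOp op i x) 1 := by
  simp [oneBoundary]

theorem oneBoundary_comp_oneBoundary (op : X → X → X)
    (sd : ∀ a b c : X, op (op a b) c = op (op a c) (op b c)) (n : ℕ) :
    oneBoundary op n ∘ₗ oneBoundary op (n + 1) = 0 := by
  refine Finsupp.lhom_ext' fun x => LinearMap.ext_ring ?_
  simp only [LinearMap.comp_apply, Finsupp.lsingle_apply, oneBoundary_single, map_sum, map_smul,
    Finset.smul_sum, smul_smul, ← pow_add, LinearMap.zero_apply]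
  exact sum_sum_neg_one_pow_smul_eq_zero
    (fun i j => Finsupp.single (dOp op j (dOp op i x)) (1 : ℤ)) fun i j => by
      rw [dOp_predAbove_dOp_succAbove op sd]

/-- The map `f_* : C_n(X) → C_n(Y)` induced by applying `f : X → Y` to every entry of a tuple.
For a right translation `f` of a shelf this is a chain map. -/
noncomputable def mapChain {Y : Type*} (f : X → Y) (n : ℕ) : C X n →ₗ[ℤ] C Y n :=
  Finsupp.lmapDomain ℤ ℤ (f ∘ ·)

theorem mapChain_single {Y : Type*} (f : X → Y) (n : ℕ) (x : Fin (n + 1) → X) (a : ℤ) :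
    mapChain f n (Finsupp.single x a) = Finsupp.single (f ∘ x) a :=
  Finsupp.mapDomain_single

theorem mapChain_injective {Y : Type*} {f : X → Y} (hf : Function.Injective f) (n : ℕ) :
    Function.Injective (mapChain f n) :=
  Finsupp.mapDomain_injective hf.comp_left

theorem mapChain_surjective {Y : Type*} {f : X → Y} (hf : Function.Surjective f) (n : ℕ) :
    Function.Surjective (mapChain f n) :=
  Finsupp.mapDomain_surjective hf.comp_left

theorem dOp_comp {Y : Type*} (op : X → X → X) (op' : Y → Y → Y) (f : X → Y)
    (hf : ∀ a b, f (op a b) = op' (f a) (f b)) {n : ℕ} (i : Fin (n + 2)) (x : Fin (n + 2) → X) :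
    dOp op' i (f ∘ x) = f ∘ dOp op i x := by
  funext j
  simp only [dOp, Function.comp_apply, apply_ite f, hf]

theorem oneBoundary_mapChain {Y : Type*} (op : X → X → X) (op' : Y → Y → Y) (f : X → Y)
    (hf : ∀ a b, f (op a b) = op' (f a) (f b)) (n : ℕ) (c : C X (n + 1)) :
    oneBoundary op' n (mapChain f (n + 1) c) = mapChain f n (oneBoundary op n c) := by
  suffices h : oneBoundary op' n ∘ₗ mapChain f (n + 1) = mapChain f n ∘ₗ oneBoundary op n from
    LinearMap.congr_fun h c
  refine Finsupp.lhom_ext' fun x => LinearMap.ext_ring ?_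
  simp only [LinearMap.comp_apply, Finsupp.lsingle_apply, mapChain_single, oneBoundary_single,
    map_sum, map_smul, dOp_comp op op' f hf]

theorem dOp_castSucc_snoc (op : X → X → X) (e : X) {n : ℕ} (i : Fin (n + 2))
    (x : Fin (n + 2) → X) :
    dOp op i.castSucc (Fin.snoc x e : Fin (n + 3) → X) =
      (Fin.snoc (dOp op i x) e : Fin (n + 2) → X) := by
  funext k
  cases k using Fin.lastCases with
  | last =>
    rw [dOp_of_le_castSucc op (Fin.castSucc_le_castSucc_iff.mpr i.le_last), Fin.succ_last,
      Fin.snoc_last, Fin.snoc_last]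
  | cast k =>
    simp only [dOp, Fin.snoc_castSucc, Fin.val_castSucc, Fin.castSucc_succAbove_castSucc]

theorem dOp_last_snoc (op : X → X → X) (e : X) {n : ℕ} (x : Fin (n + 1) → X) :
    dOp op (Fin.last (n + 1)) (Fin.snoc x e : Fin (n + 2) → X) = (op · e) ∘ x := by
  funext k
  rw [dOp_of_castSucc_lt op k.castSucc_lt_last, Fin.snoc_castSucc, Fin.snoc_last,
    Function.comp_apply]

/-- The map `C_n → C_{n+1}` appending `e` to a tuple: up to sign, a homotopy from the chain map of
right translation by `e` to zero. -/
noncomputable def snocChain (e : X) (n : ℕ) : C X n →ₗ[ℤ] C X (n + 1) :=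
  Finsupp.lmapDomain ℤ ℤ fun x => Fin.snoc x e

theorem snocChain_single (e : X) (n : ℕ) (x : Fin (n + 1) → X) (a : ℤ) :
    snocChain e n (Finsupp.single x a) =
      Finsupp.single (Fin.snoc x e : Fin (n + 2) → X) a :=
  Finsupp.mapDomain_single

theorem oneBoundary_snocChain (op : X → X → X) (e : X) (n : ℕ) (c : C X (n + 1)) :
    oneBoundary op (n + 1) (snocChain e (n + 1) c) =
      snocChain e n (oneBoundary op n c) + (-1 : ℤ) ^ (n + 2) • mapChain (op · e) (n + 1) c := by
  suffices h : oneBoundary op (n + 1) ∘ₗ snocChain e (n + 1) =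
      snocChain e n ∘ₗ oneBoundary op n + (-1 : ℤ) ^ (n + 2) • mapChain (op · e) (n + 1) from
    LinearMap.congr_fun h c
  refine Finsupp.lhom_ext' fun x => LinearMap.ext_ring ?_
  simp only [LinearMap.comp_apply, LinearMap.add_apply, LinearMap.smul_apply,
    Finsupp.lsingle_apply, snocChain_single, mapChain_single, oneBoundary_single, map_sum,
    map_smul]
  rw [Fin.sum_univ_castSucc]
  simp only [dOp_castSucc_snoc, dOp_last_snoc, Fin.val_castSucc, Fin.val_last]

theorem mapChain_mem_range_oneBoundary (op : X → X → X) (e : X) {n : ℕ} {c : C X (n + 1)}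
    (hc : oneBoundary op n c = 0) :
    mapChain (op · e) (n + 1) c ∈ LinearMap.range (oneBoundary op (n + 1)) := by
  refine ⟨(-1 : ℤ) ^ (n + 2) • snocChain e (n + 1) c, ?_⟩
  rw [map_smul, oneBoundary_snocChain, hc, map_zero, zero_add, smul_smul, ← mul_pow,
    neg_one_mul, neg_neg, one_pow, one_smul]

theorem unital_shelf_one_term_homology_trivial_general (op : X → X → X)
    (sd : ∀ a b c : X, op (op a b) c = op (op a c) (op b c))
    (e : X) (he : Function.Bijective (op · e)) (n : ℕ) :
    LinearMap.ker (oneBoundary op n) = LinearMap.range (oneBoundary op (n + 1)) := by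
  refine le_antisymm (fun c hc => ?_)
    (LinearMap.range_le_ker_iff.mpr (oneBoundary_comp_oneBoundary op sd n))
  obtain ⟨b, rfl⟩ := mapChain_surjective he.surjective (n + 1) c
  have hb : oneBoundary op n b = 0 := by
    apply mapChain_injective he.injective n
    rw [← oneBoundary_mapChain op op (op · e) (sd · · e), map_zero]
    exact hc
  exact mapChain_mem_range_oneBoundary op e hb

/-- A unital shelf has trivial one-term homology in all positive
dimensions: for every `n ≥ 1`, `ker ∂_n = im ∂_{n+1}`. -/
theorem unital_shelf_one_term_homology_trivial (op : X → X → X)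
    (sd : ∀ a b c : X, op (op a b) c = op (op a c) (op b c))
    (e : X) (he₁ : ∀ x : X, op e x = x) (he₂ : ∀ x : X, op x e = x) :
    ∀ n : ℕ, LinearMap.ker (oneBoundary op n) = LinearMap.range (oneBoundary op (n + 1)) :=
  unital_shelf_one_term_homology_trivial_general op sd e
    ((funext he₂ : (op · e) = id) ▸ Function.bijective_id)

end OneTermHomology
end

section
/- Every finite nonempty proto-unital shelf has at least one right zero: if (X,*) is a finite nonempty shelf satisfying a*b = b*(a*b) and a*b = (a*b)*b for all a,b ∈ X, then there exists r ∈ X with x*r = r for all x ∈ X. -/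
/-!
A proto-unital shelf is a semigroup. In a semigroup with `b * (a * b) = a * b`, if left
multiplication by every element of `s` fixes `r`, then it also fixes `r * y` by associativity, and
left multiplication by `y` fixes `r * y` as well. So elements can be added to `s` one at a time.
-/

/-- Proto-unital shelves, as a predicate on a bare operation because Mathlib's `Shelf` is left
self-distributive. -/
structure IsProtoUnitalShelf {X : Type*} (op : X → X → X) : Prop where
  self_distrib : ∀ a b c : X, op (op a b) c = op (op a c) (op b c)
  left_absorb : ∀ a b : X, op b (op a b) = op a b
  right_absorb : ∀ a b : X, op (op a b) b = op a b

theorem IsProtoUnitalShelf.associative {X : Type*} {op : X → X → X}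
    (h : IsProtoUnitalShelf op) : Std.Associative op where
  assoc a b c := calc
    op (op a b) c = op (op a c) (op b c) := h.self_distrib a b c
    _ = op (op a (op b c)) (op c (op b c)) := h.self_distrib a c (op b c)
    _ = op (op a (op b c)) (op b c) := by rw [h.left_absorb b c]
    _ = op a (op b c) := h.right_absorb a (op b c)

theorem exists_forall_mem_op_eq_right {X : Type*} [Nonempty X] {op : X → X → X}
    [Std.Associative op] (left_absorb : ∀ a b : X, op b (op a b) = op a b)
    {s : Set X} (hs : s.Finite) : ∃ r : X, ∀ x ∈ s, op x r = r := by
  induction s, hs using Set.Finite.induction_on with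
  | empty => simp
  | @insert y s _ _ ih =>
    obtain ⟨r, hr⟩ := ih
    refine ⟨op r y, Set.forall_mem_insert.mpr ⟨left_absorb r y, fun x hx => ?_⟩⟩
    calc
      op x (op r y) = op (op x r) y := (Std.Associative.assoc x r y).symm
      _ = op r y := by rw [hr x hx]

theorem finite_proto_unital_shelf_has_right_zero_general {X : Type*} [Nonempty X]
    {op : X → X → X} (h : IsProtoUnitalShelf op) {s : Set X} (hs : s.Finite) :
    ∃ r : X, ∀ x ∈ s, op x r = r :=
  have := h.associative
  exists_forall_mem_op_eq_right h.left_absorb hs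

/-- Every finite nonempty proto-unital shelf has a right zero. -/
theorem finite_proto_unital_shelf_has_right_zero {X : Type*} [Finite X] [Nonempty X]
    (op : X → X → X)
    (sd : ∀ a b c : X, op (op a b) c = op (op a c) (op b c))
    (h₁ : ∀ a b : X, op a b = op b (op a b))
    (h₂ : ∀ a b : X, op a b = op (op a b) b) :
    ∃ r : X, ∀ x : X, op x r = r := by
  have h : IsProtoUnitalShelf op := ⟨sd, fun a b => (h₁ a b).symm, fun a b => (h₂ a b).symm⟩
  simpa using finite_proto_unital_shelf_has_right_zero_general h Set.finite_univ
end
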